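/- arXiv:2403.09989 — 2 statements merged into one kernel-verified Lean document; each statement's English description precedes it below -/
import Mathlib

section
/- Three-dimensional interpolation estimate (Case 2 of the third Duhamel term): fix 8/3 ≤ r < 4. For any t > 0, any A > 0, any measurable interval I ⊆ [A, t/2], and any measurable u : I × ℝ³ → ℂ, one has ‖ ∫_I e^{i(t−s)Δ} (|u|^{4/3}u)(s) ds ‖_{L^r_x(ℝ³)} ≤ C t^{−3(1/2−1/r)} A^{−(4−r)/(2r)} ‖u‖_{L^∞_s L²_x(I×ℝ³)}^{2(3r−8)/(3(r−2))} ( sup_{s ∈ I} s^{3(1/2−1/r)} ‖u(s)‖_{L^r_x(ℝ³)} )^{(r+2)/(3(r−2))}, with C depending only on r. -/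
open MeasureTheory Set
open scoped ENNReal Real

noncomputable section

/-- The free Schrödinger propagator `e^{itΔ}` acting on functions on a `d`-dimensional space:
for `t ≠ 0`, `(e^{itΔ}f)(x) = (4πit)^{-d/2} ∫ e^{i|x-y|²/(4t)} f(y) dy`, and `e^{i0Δ}f = f`. -/
def schrod {E : Type*} [NormedAddCommGroup E] [MeasureSpace E] (d : ℕ) (t : ℝ) (f : E → ℂ) :
    E → ℂ :=
  if t = 0 then f
  else fun x =>
    (4 * (Real.pi : ℂ) * Complex.I * (t : ℂ)) ^ (-(d : ℂ) / 2) *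
      ∫ y, Complex.exp (Complex.I * ((‖x - y‖ ^ 2 : ℝ) : ℂ) / (4 * (t : ℂ))) * f y

/-- Mixed Lebesgue norm `‖u‖_{L^p_t L^q_x (I × space)}`. -/
def mixedNorm {α : Type*} [MeasurableSpace α] (ν : Measure α) (I : Set ℝ) (p q : ℝ≥0∞)
    (u : ℝ → α → ℂ) : ℝ≥0∞ :=
  if p = ∞ then essSup (fun t => eLpNorm (u t) q ν) (volume.restrict I)
  else (∫⁻ t in I, eLpNorm (u t) q ν ^ p.toReal) ^ (1 / p.toReal)

/-- Lorentz quasinorm `p^{1/q} ‖ λ · ν({g > λ})^{1/p} ‖_{L^q((0,∞), dλ/λ)}`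
for an `ℝ≥0∞`-valued function `g`. -/
def lorentzNorm {α : Type*} [MeasurableSpace α] (ν : Measure α) (p q : ℝ≥0∞)
    (g : α → ℝ≥0∞) : ℝ≥0∞ :=
  if q = ∞ then
    ⨆ l ∈ Set.Ioi (0 : ℝ), ENNReal.ofReal l * ν {x | ENNReal.ofReal l < g x} ^ p⁻¹.toReal
  else
    (p * ∫⁻ l in Set.Ioi (0 : ℝ),
        (ENNReal.ofReal l * ν {x | ENNReal.ofReal l < g x} ^ p⁻¹.toReal) ^ q.toReal /
          ENNReal.ofReal l) ^ q⁻¹.toReal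

/-- Lorentz quasinorm `‖f‖_{L^{p,q}}` of a scalar function. -/
def lorentzNormC {α : Type*} [MeasurableSpace α] (ν : Measure α) (p q : ℝ≥0∞)
    (f : α → ℂ) : ℝ≥0∞ :=
  lorentzNorm ν p q fun x => (‖f x‖₊ : ℝ≥0∞)

/-- Lorentz-in-time mixed norm `‖u‖_{L^{p,q}_t L^r_x (I × space)}`. -/
def lorentzMixedNorm {α : Type*} [MeasurableSpace α] (ν : Measure α) (I : Set ℝ)
    (p q r : ℝ≥0∞) (u : ℝ → α → ℂ) : ℝ≥0∞ :=
  lorentzNorm (volume.restrict I) p q fun t => eLpNorm (u t) r ν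

/-- The nonlinearity `|f|^a f`. -/
def nonlin {E : Type*} (a : ℝ) (f : E → ℂ) : E → ℂ := fun x => ((‖f x‖ ^ a : ℝ) : ℂ) * f x


open Complex in
/-- The kernel. -/
def cKer (τ : ℝ) : ℂ := (4 * (Real.pi : ℂ) * Complex.I * (τ : ℂ)) ^ (-((3 : ℕ) : ℂ) / 2)

abbrev V3 := EuclideanSpace ℝ (Fin 3)

def Ker (τ : ℝ) (x y : V3) : ℂ :=
  cKer τ * Complex.exp (Complex.I * ((‖x - y‖ ^ 2 : ℝ) : ℂ) / (4 * (τ : ℂ)))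

lemma measurable_cKer : Measurable cKer := by
  unfold cKer
  fun_prop

lemma measurable_Ker : Measurable (fun p : ℝ × V3 × V3 => Ker p.1 p.2.1 p.2.2) := by
  unfold Ker
  have := measurable_cKer
  fun_prop

lemma Ker_symm (τ : ℝ) (x y : V3) : Ker τ x y = Ker τ y x := by
  unfold Ker; rw [norm_sub_rev]

lemma norm_cKer {τ : ℝ} (h : 0 < τ) : ‖cKer τ‖ = (4 * π * τ) ^ (-(3 / 2 : ℝ)) := by
  unfold cKer
  have hz : (4 * (Real.pi : ℂ) * Complex.I * (τ : ℂ)) ≠ 0 := by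
    simp [Real.pi_ne_zero, h.ne']
  rw [Complex.norm_cpow_of_ne_zero hz]
  have e : (-((3 : ℕ) : ℂ) / 2) = ((-(3 / 2) : ℝ) : ℂ) := by push_cast; ring
  rw [e, Complex.ofReal_re, Complex.ofReal_im]
  simp [abs_of_pos h, abs_of_pos Real.pi_pos]

lemma norm_Ker {τ : ℝ} (h : 0 < τ) (x y : V3) : ‖Ker τ x y‖ = (4 * π * τ) ^ (-(3 / 2 : ℝ)) := by
  unfold Ker
  rw [norm_mul, norm_cKer h, Complex.norm_exp]
  have : (Complex.I * ((‖x - y‖ ^ 2 : ℝ) : ℂ) / (4 * (τ : ℂ))) =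
    ((‖x - y‖ ^ 2 / (4 * τ) : ℝ) : ℂ) * Complex.I := by push_cast; ring
  rw [this, Complex.re_ofReal_mul, Complex.I_re]
  simp

lemma schrod_eq {τ : ℝ} (h : 0 < τ) (f : V3 → ℂ) (x : V3) :
    schrod 3 τ f x = ∫ y, Ker τ x y * f y := by
  unfold schrod Ker
  rw [if_neg h.ne']
  have : ∀ y : V3, cKer τ * Complex.exp (Complex.I * ((‖x - y‖ ^ 2 : ℝ) : ℂ) / (4 * (τ : ℂ))) * f y
    = cKer τ * (Complex.exp (Complex.I * ((‖x - y‖ ^ 2 : ℝ) : ℂ) / (4 * (τ : ℂ))) * f y) :=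
    fun y => mul_assoc _ _ _
  simp only [this]
  rw [integral_const_mul]
  rfl

open Complex ComplexConjugate in
lemma gaussKer {τ τ' ε : ℝ} (h : 0 < τ) (h' : 0 < τ') (hε : 0 < ε) (y y' : V3) :
    ∫ x : V3, Ker τ x y * conj (Ker τ' x y') * (Real.exp (-ε * ‖x‖ ^ 2) : ℂ) =
      cKer τ * conj (cKer τ') * cexp (((‖y‖ ^ 2 / (4 * τ) - ‖y'‖ ^ 2 / (4 * τ') : ℝ) : ℂ) * I) *
      ((π / ((ε : ℂ) - ((1 / (4 * τ) - 1 / (4 * τ') : ℝ) : ℂ) * I)) ^ (3 / 2 : ℂ) *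
        cexp (-(‖(1 / (2 * τ')) • y' - (1 / (2 * τ)) • y‖ ^ 2 : ℝ) /
          (4 * ((ε : ℂ) - ((1 / (4 * τ) - 1 / (4 * τ') : ℝ) : ℂ) * I)))) := by
  have hb : 0 < ((ε : ℂ) - ((1 / (4 * τ) - 1 / (4 * τ') : ℝ) : ℂ) * I).re := by
    rw [sub_re, re_ofReal_mul]; simpa using hε
  have key := GaussianFourier.integral_cexp_neg_mul_sq_norm_add hb I
    ((1 / (2 * τ')) • y' - (1 / (2 * τ)) • y)
  have e3 : ((Module.finrank ℝ V3 : ℂ) / 2) = (3 / 2 : ℂ) := by simp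
  rw [e3] at key
  have e4 : I ^ 2 * (‖(1 / (2 * τ')) • y' - (1 / (2 * τ)) • y‖ : ℂ) ^ 2 =
    -((‖(1 / (2 * τ')) • y' - (1 / (2 * τ)) • y‖ ^ 2 : ℝ) : ℂ) := by
    push_cast; rw [I_sq]; ring
  rw [e4] at key
  rw [← key, ← integral_const_mul]
  congr 1; ext x
  unfold Ker
  rw [map_mul, ← Complex.exp_conj]
  have : ∀ a b c d e : ℂ, a * b * (c * d) * e = a * c * (b * d * e) := by intros; ring
  rw [this, mul_assoc (cKer τ * _)]
  congr 1
  rw [Complex.ofReal_exp, ← Complex.exp_add, ← Complex.exp_add, ← Complex.exp_add]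
  congr 1
  rw [norm_sub_sq_real, norm_sub_sq_real]
  simp only [map_div₀, map_mul, conj_I, conj_ofReal, map_ofNat, real_inner_comm x, inner_sub_right,
    inner_smul_right]
  push_cast
  simp
  have : (τ : ℂ) ≠ 0 := by exact_mod_cast h.ne'
  have : (τ' : ℂ) ≠ 0 := by exact_mod_cast h'.ne'
  field_simp
  ring

open Complex ComplexConjugate in
lemma norm_gaussKer {τ τ' ε : ℝ} (h : 0 < τ) (h' : 0 < τ') (hε : 0 < ε) (y y' : V3) :
    ‖∫ x : V3, Ker τ x y * conj (Ker τ' x y') * (Real.exp (-ε * ‖x‖ ^ 2) : ℂ)‖ ≤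
      |τ - τ'| ^ (-(3 / 2) : ℝ) ∨ τ = τ' := by
  by_cases hne : τ = τ'
  · exact Or.inr hne
  left
  rw [gaussKer h h' hε]
  set b : ℂ := ((ε : ℂ) - ((1 / (4 * τ) - 1 / (4 * τ') : ℝ) : ℂ) * I) with hb
  have hbre : b.re = ε := by rw [hb, sub_re, re_ofReal_mul]; simp
  have hbim : b.im = -(1 / (4 * τ) - 1 / (4 * τ')) := by rw [hb, sub_im, im_ofReal_mul]; simp
  have hb0 : b ≠ 0 := by intro h0; rw [h0] at hbre; simp at hbre; linarith
  have hdpos : 0 < |τ - τ'| := abs_pos.mpr (sub_ne_zero.mpr hne)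
  have hbn : |τ - τ'| / (4 * τ * τ') ≤ ‖b‖ := by
    refine le_trans (le_of_eq ?_) (Complex.abs_im_le_norm b)
    rw [hbim, abs_neg]
    have : 1 / (4 * τ) - 1 / (4 * τ') = -(τ - τ') / (4 * τ * τ') := by field_simp; ring
    rw [this, abs_div, abs_neg, abs_of_pos (show 0 < 4 * τ * τ' by positivity)]
  have h1 : ‖cexp (-(‖(1 / (2 * τ')) • y' - (1 / (2 * τ)) • y‖ ^ 2 : ℝ) / (4 * b))‖ ≤ 1 := by
    rw [Complex.norm_exp, Real.exp_le_one_iff, ← neg_div' , neg_re, Complex.div_re]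
    simp only [ofReal_re, ofReal_im, zero_mul, zero_div, add_zero, Left.neg_nonpos_iff]
    have : (4 * b).re = 4 * ε := by simp [hbre]
    rw [this]
    have := Complex.normSq_nonneg (4 * b)
    positivity
  have h2 : ‖((π : ℂ) / b) ^ (3 / 2 : ℂ)‖ = (π / ‖b‖) ^ (3 / 2 : ℝ) := by
    rw [Complex.norm_cpow_of_ne_zero (div_ne_zero (by simp [Real.pi_ne_zero]) hb0)]
    have e : (3 / 2 : ℂ) = ((3 / 2 : ℝ) : ℂ) := by push_cast; ring
    rw [e, Complex.ofReal_re, Complex.ofReal_im]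
    simp [abs_of_pos Real.pi_pos]
  rw [norm_mul, norm_mul, norm_mul, norm_mul, h2, Complex.norm_exp_ofReal_mul_I,
    RCLike.norm_conj, norm_cKer h, norm_cKer h', mul_one]
  have hdd : 0 < |τ - τ'| / (4 * τ * τ') := by positivity
  calc _ ≤ (4 * π * τ) ^ (-(3 / 2 : ℝ)) * (4 * π * τ') ^ (-(3 / 2 : ℝ)) *
        ((π / (|τ - τ'| / (4 * τ * τ'))) ^ (3 / 2 : ℝ) * 1) := by
        gcongr
    _ = (4 * π * |τ - τ'|) ^ (-(3 / 2 : ℝ)) := by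
        rw [mul_one, Real.rpow_neg (by positivity), Real.rpow_neg (by positivity),
          Real.rpow_neg (by positivity), ← Real.inv_rpow (by positivity),
          ← Real.inv_rpow (by positivity), ← Real.inv_rpow (by positivity),
          ← Real.mul_rpow (by positivity) (by positivity),
          ← Real.mul_rpow (by positivity) (by positivity)]
        congr 1
        field_simp
        try ring
    _ ≤ |τ - τ'| ^ (-(3 / 2) : ℝ) := by
        apply Real.rpow_le_rpow_of_nonpos hdpos _ (by norm_num)
        nlinarith [Real.pi_gt_three]

open Complex ComplexConjugate in
lemma norm_gaussKer_diag {τ ε : ℝ} (h : 0 < τ) (hε : 0 < ε) (y y' : V3) :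
    ‖∫ x : V3, Ker τ x y * conj (Ker τ x y') * (Real.exp (-ε * ‖x‖ ^ 2) : ℂ)‖ =
      (4 * π * τ) ^ (-(3 : ℝ)) * (π / ε) ^ (3 / 2 : ℝ) *
        Real.exp (-(1 / (16 * τ ^ 2 * ε)) * ‖y - y'‖ ^ 2) := by
  rw [gaussKer h h hε]
  simp only [sub_self, ofReal_zero, zero_mul, sub_zero]
  have h2 : ‖((π : ℂ) / (ε : ℂ)) ^ (3 / 2 : ℂ)‖ = (π / ε) ^ (3 / 2 : ℝ) := by
    rw [← Complex.ofReal_div, Complex.norm_cpow_eq_rpow_re_of_pos (by positivity)]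
    simp
  rw [norm_mul, norm_mul, norm_mul, norm_mul, h2, Complex.norm_exp_ofReal_mul_I,
    RCLike.norm_conj, norm_cKer h, mul_one, ← Real.rpow_add (by positivity), ← smul_sub,
    norm_smul, Complex.norm_exp]
  have : (-((‖1 / (2 * τ)‖ * ‖y' - y‖) ^ 2 : ℝ) / (4 * (ε : ℂ))).re =
    -(1 / (16 * τ ^ 2 * ε)) * ‖y - y'‖ ^ 2 := by
    rw [← ofReal_ofNat, ← ofReal_mul, ← ofReal_neg, ← ofReal_div, ofReal_re, norm_sub_rev,
      Real.norm_eq_abs, mul_pow, sq_abs]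
    field_simp
    ring
  rw [this]
  norm_num
  ring

/-- total mass -/
lemma diag_mass {τ ε : ℝ} (h : 0 < τ) (hε : 0 < ε) (y : V3) :
    ∫⁻ y' : V3, ENNReal.ofReal ((4 * π * τ) ^ (-(3 : ℝ)) * (π / ε) ^ (3 / 2 : ℝ) *
        Real.exp (-(1 / (16 * τ ^ 2 * ε)) * ‖y - y'‖ ^ 2)) = 1 := by
  rw [lintegral_sub_left_eq_self (fun z : V3 => ENNReal.ofReal ((4 * π * τ) ^ (-(3 : ℝ)) * (π / ε) ^ (3 / 2 : ℝ) *
        Real.exp (-(1 / (16 * τ ^ 2 * ε)) * ‖z‖ ^ 2))) y]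
  have hb : 0 < 1 / (16 * τ ^ 2 * ε) := by positivity
  have hI : Integrable (fun z : V3 => Real.exp (-(1 / (16 * τ ^ 2 * ε)) * ‖z‖ ^ 2)) := by
    have := (GaussianFourier.integrable_cexp_neg_mul_sq_norm_add (V := V3)
      (b := ((1 / (16 * τ ^ 2 * ε) : ℝ) : ℂ)) (by rw [Complex.ofReal_re]; exact hb) 0 0).norm
    refine this.congr (Filter.Eventually.of_forall fun z => ?_)
    simp only [Complex.norm_exp]
    congr 1
    rw [zero_mul, add_zero, ← Complex.ofReal_neg, ← Complex.ofReal_pow, ← Complex.ofReal_mul,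
      Complex.ofReal_re]
  rw [← ofReal_integral_eq_lintegral_ofReal (hI.const_mul _)
    (Filter.Eventually.of_forall fun z => by positivity), integral_const_mul,
    GaussianFourier.integral_rexp_neg_mul_sq_norm hb]
  have : (Module.finrank ℝ V3 / 2 : ℝ) = 3 / 2 := by simp
  rw [this, ENNReal.ofReal_eq_one, mul_assoc, ← Real.mul_rpow (by positivity) (by positivity)]
  have : π / ε * (π / (1 / (16 * τ ^ 2 * ε))) = (4 * π * τ) ^ (2 : ℝ) := by
    rw [Real.rpow_two]; field_simp; ring
  rw [this, ← Real.rpow_mul (by positivity), ← Real.rpow_add (by positivity)]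
  norm_num

def Sf (τ : ℝ) (f : V3 → ℂ) (x : V3) : ℂ := ∫ y, Ker τ x y * f y

def gam (ε : ℝ) : Measure V3 :=
  (volume : Measure V3).withDensity (fun x => ENNReal.ofReal (Real.exp (-ε * ‖x‖ ^ 2)))

lemma integrable_gauss {b : ℝ} (hb : 0 < b) :
    Integrable (fun z : V3 => Real.exp (-b * ‖z‖ ^ 2)) := by
  have := (GaussianFourier.integrable_cexp_neg_mul_sq_norm_add (V := V3)
      (b := (b : ℂ)) (by rw [Complex.ofReal_re]; exact hb) 0 0).norm
  refine this.congr (Filter.Eventually.of_forall fun z => ?_)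
  simp only [Complex.norm_exp]
  congr 1
  rw [zero_mul, add_zero, ← Complex.ofReal_neg, ← Complex.ofReal_pow, ← Complex.ofReal_mul,
      Complex.ofReal_re]

lemma gam_finite {ε : ℝ} (hε : 0 < ε) : IsFiniteMeasure (gam ε) := by
  unfold gam
  apply isFiniteMeasure_withDensity
  rw [← lt_top_iff_ne_top]
  exact (integrable_gauss hε).lintegral_lt_top

lemma integral_gam (ε : ℝ) (f : V3 → ℂ) :
    ∫ x, f x ∂(gam ε) = ∫ x, f x * (Real.exp (-ε * ‖x‖ ^ 2) : ℂ) := by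
  unfold gam
  rw [integral_withDensity_eq_integral_toReal_smul (by fun_prop) (by simp)]
  congr 1; ext x
  rw [ENNReal.toReal_ofReal (Real.exp_pos _).le, Complex.real_smul, mul_comm]

@[fun_prop]
lemma Ker_comp {α : Type*} [MeasurableSpace α] {a : α → ℝ} {b c : α → V3} (ha : Measurable a)
    (hb : Measurable b) (hc : Measurable c) : Measurable (fun q => Ker (a q) (b q) (c q)) :=
  measurable_Ker.comp (ha.prodMk (hb.prodMk hc))

lemma Ker_meas_left (τ : ℝ) (y : V3) : Measurable (fun x => Ker τ x y) :=
  measurable_Ker.comp (by fun_prop : Measurable fun x : V3 => (τ, x, y))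

lemma Ker_meas (τ : ℝ) : Measurable (fun p : V3 × V3 => Ker τ p.1 p.2) :=
  measurable_Ker.comp (by fun_prop : Measurable fun p : V3 × V3 => (τ, p.1, p.2))

lemma Sf_meas (τ : ℝ) {f : V3 → ℂ} (hf : Measurable f) : Measurable (Sf τ f) := by
  unfold Sf
  have h : StronglyMeasurable (fun p : V3 × V3 => Ker τ p.1 p.2 * f p.2) :=
    ((Ker_meas τ).mul (hf.comp measurable_snd)).stronglyMeasurable
  exact h.integral_prod_right'.measurable

open ComplexConjugate in
lemma pair_eq {τ τ' ε : ℝ} (h : 0 < τ) (h' : 0 < τ') (hε : 0 < ε) {f g : V3 → ℂ}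
    (hf : Measurable f) (hg : Measurable g) (hfi : Integrable f) (hgi : Integrable g) :
    ∫ x, Sf τ f x * conj (Sf τ' g x) ∂(gam ε) =
      ∫ p : V3 × V3, f p.1 * conj (g p.2) *
        (∫ x : V3, Ker τ x p.1 * conj (Ker τ' x p.2) ∂(gam ε)) := by
  have := gam_finite hε
  have e1 : ∀ x, Sf τ f x * conj (Sf τ' g x) =
      ∫ p : V3 × V3, (Ker τ x p.1 * f p.1) * conj (Ker τ' x p.2 * g p.2) := by
    intro x
    unfold Sf
    rw [← integral_conj]
    exact (integral_prod_mul (fun y => Ker τ x y * f y) (fun y => conj (Ker τ' x y * g y))).symm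
  simp only [e1]
  rw [integral_integral_swap]
  · congr 1; ext p
    rw [← integral_const_mul]
    congr 1; ext x
    rw [map_mul]; ring
  · have hI : Integrable (fun q : V3 × V3 × V3 => ((4 * π * τ) ^ (-(3 / 2 : ℝ)) *
        (4 * π * τ') ^ (-(3 / 2 : ℝ))) * (‖f q.2.1‖ * ‖g q.2.2‖)) ((gam ε).prod volume) := by
      have := (integrable_const ((4 * π * τ) ^ (-(3 / 2 : ℝ)) *
        (4 * π * τ') ^ (-(3 / 2 : ℝ))) (μ := gam ε)).mul_prod (hfi.norm.mul_prod hgi.norm)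
      exact this
    refine hI.mono' ?_ (Filter.Eventually.of_forall fun q => ?_)
    · apply Measurable.aestronglyMeasurable
      have m1 : Measurable fun q : V3 × V3 × V3 => Ker τ q.1 q.2.1 :=
        Ker_comp measurable_const measurable_fst (measurable_fst.comp measurable_snd)
      have m2 : Measurable fun q : V3 × V3 × V3 => Ker τ' q.1 q.2.2 :=
        Ker_comp measurable_const measurable_fst (measurable_snd.comp measurable_snd)
      have m3 : Measurable fun q : V3 × V3 × V3 => f q.2.1 :=
        hf.comp (measurable_fst.comp measurable_snd)
      have m4 : Measurable fun q : V3 × V3 × V3 => g q.2.2 :=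
        hg.comp (measurable_snd.comp measurable_snd)
      exact (m1.mul m3).mul (Complex.continuous_conj.measurable.comp (m2.mul m4))
    · simp only [Function.uncurry, norm_mul, RCLike.norm_conj, norm_Ker h, norm_Ker h']
      apply le_of_eq; ring

open ComplexConjugate in
lemma pair_le1 {τ τ' ε : ℝ} (h : 0 < τ) (h' : 0 < τ') (hne : τ ≠ τ') (hε : 0 < ε) {f g : V3 → ℂ}
    (hf : Measurable f) (hg : Measurable g) (hfi : Integrable f) (hgi : Integrable g) :
    ‖∫ x, Sf τ f x * conj (Sf τ' g x) ∂(gam ε)‖ₑ ≤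
      ENNReal.ofReal (|τ - τ'| ^ (-(3 / 2) : ℝ)) * ((∫⁻ y, ‖f y‖ₑ) * ∫⁻ y, ‖g y‖ₑ) := by
  rw [pair_eq h h' hε hf hg hfi hgi]
  refine (enorm_integral_le_lintegral_enorm _).trans ?_
  rw [← lintegral_prod_mul (hf.enorm.aemeasurable) (hg.enorm.aemeasurable)]
  rw [← lintegral_const_mul _ (by
    exact ((hf.comp measurable_fst).enorm.mul (hg.comp measurable_snd).enorm))]
  refine lintegral_mono fun p => ?_
  simp only [enorm_mul, RCLike.enorm_conj]
  rw [mul_comm]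
  gcongr
  rw [integral_gam, ← ofReal_norm]
  apply ENNReal.ofReal_le_ofReal
  exact (norm_gaussKer h h' hε p.1 p.2).resolve_right hne

lemma ennreal_mul_le_sq (a b : ℝ≥0∞) : a * b ≤ a ^ 2 + b ^ 2 := by
  rcases le_total a b with h | h
  · calc a * b ≤ b * b := by gcongr
      _ = b ^ 2 := (sq b).symm
      _ ≤ _ := le_add_self
  · calc a * b ≤ a * a := by gcongr
      _ = a ^ 2 := (sq a).symm
      _ ≤ _ := le_self_add

open ComplexConjugate in
lemma Sf_L2 {τ ε : ℝ} (h : 0 < τ) (hε : 0 < ε) {f : V3 → ℂ}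
    (hf : Measurable f) (hfi : Integrable f) :
    ∫⁻ x, ‖Sf τ f x‖ₑ ^ 2 ∂(gam ε) ≤ 2 * ∫⁻ y, ‖f y‖ₑ ^ 2 := by
  have := gam_finite hε
  have hb : ∀ x, ‖Sf τ f x‖ ≤ (4 * π * τ) ^ (-(3 / 2 : ℝ)) * ∫ y, ‖f y‖ := by
    intro x
    unfold Sf
    refine (norm_integral_le_integral_norm _).trans ?_
    simp only [norm_mul, norm_Ker h]
    rw [integral_const_mul]
  have hI : Integrable (fun x => Sf τ f x * conj (Sf τ f x)) (gam ε) := by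
    refine Integrable.of_bound (((Sf_meas τ hf).mul
      (Complex.continuous_conj.measurable.comp (Sf_meas τ hf))).aestronglyMeasurable)
      (((4 * π * τ) ^ (-(3 / 2 : ℝ)) * ∫ y, ‖f y‖) * ((4 * π * τ) ^ (-(3 / 2 : ℝ)) * ∫ y, ‖f y‖))
      (Filter.Eventually.of_forall fun x => ?_)
    simp only [Pi.mul_apply, Function.comp_apply, norm_mul, RCLike.norm_conj]
    have := hb x
    gcongr
  have e0 : ∀ x, Sf τ f x * conj (Sf τ f x) = ((‖Sf τ f x‖ ^ 2 : ℝ) : ℂ) := by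
    intro x
    rw [Complex.mul_conj, Complex.normSq_eq_norm_sq]
  have e1 : ∫⁻ x, ‖Sf τ f x‖ₑ ^ 2 ∂(gam ε) = ‖∫ x, Sf τ f x * conj (Sf τ f x) ∂(gam ε)‖ₑ := by
    simp only [e0] at hI ⊢
    rw [show ∫ x, ((‖Sf τ f x‖ ^ 2 : ℝ) : ℂ) ∂(gam ε) =
      ((∫ x, ‖Sf τ f x‖ ^ 2 ∂(gam ε) : ℝ) : ℂ) from integral_ofReal]
    have hI' : Integrable (fun x => ‖Sf τ f x‖ ^ 2) (gam ε) := by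
      have := hI.norm
      refine this.congr (Filter.Eventually.of_forall fun x => ?_)
      simp
    rw [← ofReal_norm, Complex.norm_real, Real.norm_eq_abs, abs_of_nonneg (integral_nonneg fun x => by positivity),
      ofReal_integral_eq_lintegral_ofReal hI' (Filter.Eventually.of_forall fun x => by positivity)]
    refine lintegral_congr fun x => ?_
    rw [ENNReal.ofReal_pow (norm_nonneg _), ofReal_norm]
  rw [e1, pair_eq h h hε hf hf hfi hfi]
  refine (enorm_integral_le_lintegral_enorm _).trans ?_
  set k : V3 → V3 → ℝ≥0∞ := fun y y' =>
    ENNReal.ofReal ((4 * π * τ) ^ (-(3 : ℝ)) * (π / ε) ^ (3 / 2 : ℝ) *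
        Real.exp (-(1 / (16 * τ ^ 2 * ε)) * ‖y - y'‖ ^ 2)) with hk
  have hkm : Measurable (Function.uncurry k) := by
    rw [hk]; unfold Function.uncurry; fun_prop
  have hks : ∀ y y', k y y' = k y' y := by intro y y'; simp only [hk]; rw [norm_sub_rev]
  have hm : ∀ y, ∫⁻ y', k y y' = 1 := fun y => diag_mass h hε y
  calc _ ≤ ∫⁻ p : V3 × V3, (‖f p.1‖ₑ ^ 2 * k p.1 p.2 + ‖f p.2‖ₑ ^ 2 * k p.1 p.2) := by
        refine lintegral_mono fun p => ?_
        simp only [enorm_mul, RCLike.enorm_conj]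
        rw [← add_mul]
        apply mul_le_mul' (ennreal_mul_le_sq _ _)
        rw [integral_gam, ← ofReal_norm, norm_gaussKer_diag h hε]
    _ = 2 * ∫⁻ y, ‖f y‖ₑ ^ 2 := by
        have m1 : Measurable fun p : V3 × V3 => ‖f p.1‖ₑ ^ 2 * k p.1 p.2 :=
          ((hf.comp measurable_fst).enorm.pow_const 2).mul hkm
        have m2 : Measurable fun p : V3 × V3 => ‖f p.2‖ₑ ^ 2 * k p.1 p.2 :=
          ((hf.comp measurable_snd).enorm.pow_const 2).mul hkm
        rw [lintegral_add_left m1]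
        have : (volume : Measure (V3 × V3)) = (volume : Measure V3).prod volume := rfl
        rw [this, lintegral_prod _ m1.aemeasurable, lintegral_prod_symm _ m2.aemeasurable, two_mul]
        congr 1
        · refine lintegral_congr fun y => ?_
          dsimp only
          rw [lintegral_const_mul _ (hkm.of_uncurry_left), hm, mul_one]
        · refine lintegral_congr fun y => ?_
          simp only [hks _ y]
          rw [lintegral_const_mul _ (hkm.of_uncurry_left), hm, mul_one]

lemma lintegral_CS {α : Type*} [MeasurableSpace α] (μ : Measure α) {f g : α → ℝ≥0∞}
    (hf : AEMeasurable f μ) (hg : AEMeasurable g μ) :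
    ∫⁻ a, f a * g a ∂μ ≤ (∫⁻ a, f a ^ 2 ∂μ) ^ (1 / 2 : ℝ) * (∫⁻ a, g a ^ 2 ∂μ) ^ (1 / 2 : ℝ) := by
  have := ENNReal.lintegral_mul_le_Lp_mul_Lq μ Real.HolderConjugate.two_two hf hg
  simpa using this

open ComplexConjugate in
lemma pair_le2 {τ τ' ε : ℝ} (h : 0 < τ) (h' : 0 < τ') (hε : 0 < ε) {f g : V3 → ℂ}
    (hf : Measurable f) (hg : Measurable g) (hfi : Integrable f) (hgi : Integrable g) :
    ‖∫ x, Sf τ f x * conj (Sf τ' g x) ∂(gam ε)‖ₑ ≤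
      2 * ((∫⁻ y, ‖f y‖ₑ ^ 2) ^ (1 / 2 : ℝ) * (∫⁻ y, ‖g y‖ₑ ^ 2) ^ (1 / 2 : ℝ)) := by
  refine (enorm_integral_le_lintegral_enorm _).trans ?_
  simp only [enorm_mul, RCLike.enorm_conj]
  refine (lintegral_CS _ (Sf_meas τ hf).enorm.aemeasurable
    (Sf_meas τ' hg).enorm.aemeasurable).trans ?_
  calc _ ≤ (2 * ∫⁻ y, ‖f y‖ₑ ^ 2) ^ (1 / 2 : ℝ) * (2 * ∫⁻ y, ‖g y‖ₑ ^ 2) ^ (1 / 2 : ℝ) := by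
        gcongr
        · exact Sf_L2 h hε hf hfi
        · exact Sf_L2 h' hε hg hgi
    _ = _ := by
        rw [ENNReal.mul_rpow_of_nonneg _ _ (by norm_num), ENNReal.mul_rpow_of_nonneg _ _ (by norm_num)]
        have : (2 : ℝ≥0∞) ^ (1 / 2 : ℝ) * 2 ^ (1 / 2 : ℝ) = 2 := by
          rw [← ENNReal.rpow_add _ _ (by norm_num) (by norm_num)]; norm_num
        rw [mul_mul_mul_comm, this]

lemma lintegral_rpow_Ioc {p b : ℝ} (hp : -1 < p) (hb : 0 ≤ b) :
    ∫⁻ x in Ioc 0 b, ENNReal.ofReal (x ^ p) = ENNReal.ofReal (b ^ (p + 1) / (p + 1)) := by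
  have hI : IntegrableOn (fun x : ℝ => x ^ p) (Ioc 0 b) := by
    have := intervalIntegral.intervalIntegrable_rpow' (a := 0) (b := b) hp
    rwa [intervalIntegrable_iff_integrableOn_Ioc_of_le hb] at this
  rw [← ofReal_integral_eq_lintegral_ofReal hI
    ((ae_restrict_iff' measurableSet_Ioc).2 (Filter.Eventually.of_forall
      fun x hx => Real.rpow_nonneg hx.1.le _)),
    ← intervalIntegral.integral_of_le hb, integral_rpow (Or.inl hp),
    Real.zero_rpow (by linarith), sub_zero]

lemma lintegral_rpow_Ioi {p a : ℝ} (hp : p < -1) (ha : 0 < a) :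
    ∫⁻ x in Ioi a, ENNReal.ofReal (x ^ p) = ENNReal.ofReal (a ^ (p + 1) / (-(p + 1))) := by
  have hI := integrableOn_Ioi_rpow_of_lt hp ha
  rw [← ofReal_integral_eq_lintegral_ofReal hI
    ((ae_restrict_iff' measurableSet_Ioi).2 (Filter.Eventually.of_forall
      fun x hx => Real.rpow_nonneg (ha.le.trans (le_of_lt hx)) _)),
    integral_Ioi_rpow_of_lt hp ha]
  rw [div_neg, neg_div]

def Psi (a σ : ℝ) : ℝ≥0∞ :=
  if |σ| ≤ a ^ 2 then ENNReal.ofReal (2 * |σ| ^ (-(1 / 2) : ℝ))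
  else ENNReal.ofReal (a ^ 2 * |σ| ^ (-(3 / 2) : ℝ))

lemma Psi_meas : Measurable (fun p : ℝ × ℝ => Psi p.1 p.2) := by
  unfold Psi
  refine Measurable.ite (measurableSet_le (by fun_prop) (by fun_prop)) ?_ ?_
  · fun_prop
  · fun_prop

lemma Psi_neg (a σ : ℝ) : Psi a (-σ) = Psi a σ := by simp [Psi]

lemma Psi_int {a : ℝ} (ha : 0 ≤ a) : ∫⁻ σ, Psi a σ ≤ ENNReal.ofReal (12 * a) := by
  have hm : Measurable (Psi a) := Psi_meas.comp (measurable_const.prodMk measurable_id)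
  have half : ∫⁻ σ in Ioi 0, Psi a σ ≤ ENNReal.ofReal (6 * a) := by
    rcases ha.eq_or_lt with rfl | ha
    · rw [setLIntegral_congr_fun measurableSet_Ioi (g := fun _ => 0)]
      · simp
      · intro σ hσ
        simp only [Psi]
        rw [if_neg]
        · simp
        · have h0 : (0:ℝ) < σ := hσ
          simp [h0.ne']
    · have hu : Ioi (0 : ℝ) = Ioc 0 (a ^ 2) ∪ Ioi (a ^ 2) := by
        rw [Ioc_union_Ioi_eq_Ioi (by positivity)]
      rw [hu]
      refine (lintegral_union_le _ _ _).trans ?_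
      have e1 : ∫⁻ σ in Ioc 0 (a ^ 2), Psi a σ = ENNReal.ofReal (4 * a) := by
        rw [setLIntegral_congr_fun measurableSet_Ioc
          (g := fun σ => ENNReal.ofReal 2 * ENNReal.ofReal (σ ^ (-(1 / 2) : ℝ)))]
        · rw [lintegral_const_mul _ (by fun_prop), lintegral_rpow_Ioc (by norm_num) (by positivity),
            ← ENNReal.ofReal_mul (by norm_num)]
          congr 1
          rw [← Real.rpow_natCast a 2, ← Real.rpow_mul ha.le]
          norm_num
          ring
        · intro σ hσ
          simp only [Psi]
          rw [abs_of_pos hσ.1, if_pos hσ.2, ENNReal.ofReal_mul (by norm_num)]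
      have e2 : ∫⁻ σ in Ioi (a ^ 2), Psi a σ = ENNReal.ofReal (2 * a) := by
        rw [setLIntegral_congr_fun measurableSet_Ioi
          (g := fun σ => ENNReal.ofReal (a ^ 2) * ENNReal.ofReal (σ ^ (-(3 / 2) : ℝ)))]
        · rw [lintegral_const_mul _ (by fun_prop), lintegral_rpow_Ioi (by norm_num) (by positivity),
            ← ENNReal.ofReal_mul (by positivity)]
          congr 1
          rw [← Real.rpow_natCast a 2, ← Real.rpow_mul ha.le, mul_div_assoc', ← Real.rpow_add ha]
          norm_num
          ring
        · intro σ hσ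
          have h0 : 0 < σ := lt_trans (by positivity) hσ
          simp only [Psi]
          rw [abs_of_pos h0, if_neg (not_le.mpr hσ), ENNReal.ofReal_mul (by positivity)]
      rw [e1, e2, ← ENNReal.ofReal_add (by positivity) (by positivity)]
      apply le_of_eq; congr 1; ring
  have hneg : ∫⁻ σ in Iio 0, Psi a σ = ∫⁻ σ in Ioi 0, Psi a σ := by
    rw [← lintegral_indicator measurableSet_Iio, ← lintegral_indicator measurableSet_Ioi,
      ← lintegral_neg_eq_self]
    refine lintegral_congr fun σ => ?_
    simp only [indicator, mem_Iio, mem_Ioi, Psi_neg, Left.neg_neg_iff]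
  have : ∫⁻ σ, Psi a σ ≤ (∫⁻ σ in Iio 0, Psi a σ) + ∫⁻ σ in Ioi 0, Psi a σ := by
    rw [← setLIntegral_univ, ← Iic_union_Ioi (a := (0 : ℝ)), setLIntegral_congr Iio_ae_eq_Iic]
    exact lintegral_union_le _ _ _
  refine this.trans ?_
  rw [hneg]
  refine (add_le_add half half).trans ?_
  rw [← ENNReal.ofReal_add (by positivity) (by positivity)]
  apply le_of_eq; congr 1; ring

lemma Psi_bound {a b σ X : ℝ} (ha : 0 ≤ a) (hb : 0 ≤ b) (hσ : σ ≠ 0)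
    (h1 : X ≤ |σ| ^ (-(3 / 2) : ℝ) * (a * b)) (h2 : X ≤ 2 * (a * b) ^ (-(1 / 2) : ℝ)) :
    ENNReal.ofReal X ≤ Psi a σ + Psi b σ := by
  have hp : 0 < |σ| := abs_pos.mpr hσ
  have h3 : X ≤ 2 * |σ| ^ (-(1 / 2) : ℝ) := by
    rcases le_total (a * b) |σ| with h | h
    · calc X ≤ |σ| ^ (-(3 / 2) : ℝ) * |σ| := h1.trans (by gcongr)
        _ = |σ| ^ (-(1 / 2) : ℝ) := by
          nth_rewrite 2 [← Real.rpow_one |σ|]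
          rw [← Real.rpow_add hp]; norm_num
        _ ≤ _ := by have := Real.rpow_nonneg hp.le (-(1 / 2) : ℝ); linarith
    · refine h2.trans ?_
      have := Real.rpow_le_rpow_of_nonpos hp h (show (-(1 / 2) : ℝ) ≤ 0 by norm_num)
      linarith
  have key : ∀ c : ℝ, X ≤ |σ| ^ (-(3 / 2) : ℝ) * c ^ 2 → ENNReal.ofReal X ≤ Psi c σ := by
    intro c hc
    unfold Psi
    split_ifs
    · exact ENNReal.ofReal_le_ofReal h3
    · exact ENNReal.ofReal_le_ofReal (by linarith)
  have hq := Real.rpow_nonneg hp.le (-(3 / 2) : ℝ)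
  rcases le_total a b with h | h
  · refine (key b (h1.trans ?_)).trans le_add_self
    gcongr; nlinarith
  · refine (key a (h1.trans ?_)).trans le_self_add
    gcongr; nlinarith

open ComplexConjugate in
lemma absL2 {α β : Type*} [MeasurableSpace α] [MeasurableSpace β] (γ : Measure β)
    [IsFiniteMeasure γ] (ν : Measure α) [SFinite ν] {v : α → β → ℂ}
    (hv : Measurable (Function.uncurry v)) {R : α → ℝ} (hR : Integrable R ν)
    (hb : ∀ᵐ s ∂ν, ∀ x, ‖v s x‖ ≤ R s) :
    ∫⁻ x, ‖∫ s, v s x ∂ν‖ₑ ^ 2 ∂γ ≤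
      ∫⁻ s, ∫⁻ s', ‖∫ x, v s x * conj (v s' x) ∂γ‖ₑ ∂ν ∂ν := by
  set T : β → ℂ := fun x => ∫ s, v s x ∂ν with hT
  have hTm : Measurable T := by
    have : StronglyMeasurable (fun p : β × α => v p.2 p.1) :=
      (hv.comp measurable_swap).stronglyMeasurable
    exact this.integral_prod_right'.measurable
  have hTb : ∀ x, ‖T x‖ ≤ ∫ s, R s ∂ν := by
    intro x
    refine norm_integral_le_of_norm_le hR ?_
    filter_upwards [hb] with s hs using hs x
  have hI : Integrable (fun x => T x * conj (T x)) γ := by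
    refine Integrable.of_bound ((hTm.mul
      (Complex.continuous_conj.measurable.comp hTm)).aestronglyMeasurable)
      ((∫ s, R s ∂ν) * (∫ s, R s ∂ν)) (Filter.Eventually.of_forall fun x => ?_)
    have := hTb x
    have h0 := norm_nonneg (T x)
    change ‖T x * conj (T x)‖ ≤ _
    rw [norm_mul, RCLike.norm_conj]
    exact mul_le_mul this this h0 (h0.trans this)
  have e0 : ∀ x, T x * conj (T x) = ((‖T x‖ ^ 2 : ℝ) : ℂ) := by
    intro x
    rw [Complex.mul_conj, Complex.normSq_eq_norm_sq]
  have e1 : ∫⁻ x, ‖T x‖ₑ ^ 2 ∂γ = ‖∫ x, T x * conj (T x) ∂γ‖ₑ := by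
    simp only [e0] at hI ⊢
    rw [show ∫ x, ((‖T x‖ ^ 2 : ℝ) : ℂ) ∂γ = ((∫ x, ‖T x‖ ^ 2 ∂γ : ℝ) : ℂ) from integral_ofReal]
    have hI' : Integrable (fun x => ‖T x‖ ^ 2) γ := by
      have := hI.norm
      refine this.congr (Filter.Eventually.of_forall fun x => ?_)
      simp
    rw [← ofReal_norm, Complex.norm_real, Real.norm_eq_abs,
      abs_of_nonneg (integral_nonneg fun x => by positivity),
      ofReal_integral_eq_lintegral_ofReal hI' (Filter.Eventually.of_forall fun x => by positivity)]
    refine lintegral_congr fun x => ?_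
    rw [ENNReal.ofReal_pow (norm_nonneg _), ofReal_norm]
  rw [e1]
  have e2 : ∀ x, T x * conj (T x) = ∫ p : α × α, v p.1 x * conj (v p.2 x) ∂(ν.prod ν) := by
    intro x
    simp only [hT]
    rw [← integral_conj]
    exact (integral_prod_mul (fun s => v s x) (fun s => conj (v s x))).symm
  simp only [e2]
  have hm3 : Measurable (fun q : β × (α × α) => v q.2.1 q.1 * conj (v q.2.2 q.1)) := by
    have m1 : Measurable (fun q : β × (α × α) => v q.2.1 q.1) :=
      hv.comp ((measurable_fst.comp measurable_snd).prodMk measurable_fst)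
    have m2 : Measurable (fun q : β × (α × α) => v q.2.2 q.1) :=
      hv.comp ((measurable_snd.comp measurable_snd).prodMk measurable_fst)
    exact m1.mul (Complex.continuous_conj.measurable.comp m2)
  rw [integral_integral_swap]
  · refine (enorm_integral_le_lintegral_enorm _).trans ?_
    rw [lintegral_prod]
    apply Measurable.aemeasurable
    have : StronglyMeasurable (fun q : (α × α) × β => v q.1.1 q.2 * conj (v q.1.2 q.2)) :=
      (hm3.comp measurable_swap).stronglyMeasurable
    exact this.integral_prod_right'.measurable.enorm
  · have hI2 : Integrable (fun q : β × (α × α) => (1 : ℝ) * (R q.2.1 * R q.2.2))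
        (γ.prod (ν.prod ν)) :=
      (integrable_const (1 : ℝ) (μ := γ)).mul_prod (hR.mul_prod hR)
    refine hI2.mono' hm3.aestronglyMeasurable ?_
    have h1 : ∀ᵐ q ∂(γ.prod (ν.prod ν)), ∀ x, ‖v q.2.1 x‖ ≤ R q.2.1 :=
      Measure.quasiMeasurePreserving_snd.ae (Measure.quasiMeasurePreserving_fst.ae hb)
    have h2 : ∀ᵐ q ∂(γ.prod (ν.prod ν)), ∀ x, ‖v q.2.2 x‖ ≤ R q.2.2 :=
      Measure.quasiMeasurePreserving_snd.ae (Measure.quasiMeasurePreserving_snd.ae hb)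
    filter_upwards [h1, h2] with q hq1 hq2
    change ‖v q.2.1 q.1 * conj (v q.2.2 q.1)‖ ≤ _
    rw [norm_mul, RCLike.norm_conj, one_mul]
    exact mul_le_mul (hq1 _) (hq2 _) (norm_nonneg _) ((norm_nonneg _).trans (hq1 q.1))

lemma SfT_meas (t : ℝ) {φ : ℝ → V3 → ℂ} (hφ : Measurable (Function.uncurry φ)) :
    Measurable (fun p : ℝ × V3 => Sf (t - p.1) (φ p.1) p.2) := by
  unfold Sf
  have m2 : Measurable (fun q : (ℝ × V3) × V3 => φ q.1.1 q.2) :=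
    hφ.comp ((measurable_fst.comp measurable_fst).prodMk measurable_snd)
  have m1 : Measurable (fun q : (ℝ × V3) × V3 => Ker (t - q.1.1) q.1.2 q.2) :=
    Ker_comp (by fun_prop) (by fun_prop) (by fun_prop)
  exact (m1.mul m2).stronglyMeasurable.integral_prod_right'.measurable

def Dt (t : ℝ) : ℝ := (2 * π * t) ^ (-(3 / 2 : ℝ))

lemma Dt_pos {t : ℝ} (ht : 0 < t) : 0 < Dt t := by unfold Dt; positivity

lemma norm_Ker_le {t s : ℝ} (ht : 0 < t) (hs : s ≤ t / 2) (x y : V3) :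
    ‖Ker (t - s) x y‖ ≤ Dt t := by
  rw [norm_Ker (by linarith)]
  unfold Dt
  apply Real.rpow_le_rpow_of_nonpos (by positivity) _ (by norm_num)
  have := Real.pi_pos
  nlinarith

lemma enorm_Sf_le {t s : ℝ} (ht : 0 < t) (hs : s ≤ t / 2) (f : V3 → ℂ) (x : V3) :
    ‖Sf (t - s) f x‖ₑ ≤ ENNReal.ofReal (Dt t) * ∫⁻ y, ‖f y‖ₑ := by
  unfold Sf
  refine (enorm_integral_le_lintegral_enorm _).trans ?_
  simp only [enorm_mul]
  rw [← lintegral_const_mul' _ _ ENNReal.ofReal_ne_top]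
  gcongr with y
  rw [← ofReal_norm]
  exact ENNReal.ofReal_le_ofReal (norm_Ker_le ht hs x y)

open ComplexConjugate in
lemma weakStr {t ε : ℝ} (ht : 0 < t) (hε : 0 < ε) {J : Set ℝ} (hJ : MeasurableSet J)
    (hJt : J ⊆ Iic (t / 2)) {φ : ℝ → V3 → ℂ} (hφ : Measurable (Function.uncurry φ))
    {ρ : ℝ → ℝ} (hρ : Measurable ρ) (hρ0 : ∀ s, 0 ≤ ρ s)
    (h1 : ∀ s ∈ J, ∫⁻ x, ‖φ s x‖ₑ ≤ ENNReal.ofReal (ρ s))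
    (h2 : ∀ s ∈ J, ∫⁻ x, ‖φ s x‖ₑ ^ 2 ≤ ENNReal.ofReal (1 / ρ s))
    (hρi : IntegrableOn ρ J) :
    ∫⁻ x, ‖∫ s in J, Sf (t - s) (φ s) x‖ₑ ^ 2 ∂(gam ε) ≤
      24 * ∫⁻ s in J, ENNReal.ofReal (ρ s) := by
  have := gam_finite hε
  have hφs : ∀ s, Measurable (φ s) := fun s => hφ.of_uncurry_left
  have hφi : ∀ s ∈ J, Integrable (φ s) := fun s hs =>
    ⟨(hφs s).aestronglyMeasurable, (h1 s hs).trans_lt ENNReal.ofReal_lt_top⟩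
  refine (absL2 (gam ε) (volume.restrict J) (v := fun s x => Sf (t - s) (φ s) x)
    (SfT_meas t hφ) (R := fun s => Dt t * ρ s) (hρi.const_mul _) ?_).trans ?_
  · filter_upwards [ae_restrict_mem hJ] with s hs x
    have := (enorm_Sf_le ht (hJt hs) (φ s) x).trans (mul_le_mul_right (h1 s hs) _)
    rw [← ENNReal.ofReal_mul (Dt_pos ht).le, ← ofReal_norm] at this
    exact (ENNReal.ofReal_le_ofReal_iff (mul_nonneg (Dt_pos ht).le (hρ0 s))).1 this
  have key : ∀ s ∈ J, ∀ s' ∈ J, s ≠ s' →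
      ‖∫ x, Sf (t - s) (φ s) x * conj (Sf (t - s') (φ s') x) ∂(gam ε)‖ₑ ≤
        Psi (ρ s) (s - s') + Psi (ρ s') (s - s') := by
    intro s hs s' hs' hne
    have p : 0 < t - s := by have : s ≤ t / 2 := hJt hs; linarith
    have p' : 0 < t - s' := by have : s' ≤ t / 2 := hJt hs'; linarith
    have b1 := pair_le1 p p' (by intro h; apply hne; linarith) hε (hφs s) (hφs s') (hφi s hs)
      (hφi s' hs')
    have b2 := pair_le2 p p' hε (hφs s) (hφs s') (hφi s hs) (hφi s' hs')
    rw [← ofReal_norm] at b1 b2 ⊢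
    refine Psi_bound (hρ0 s) (hρ0 s') (sub_ne_zero.2 hne) ?_ ?_
    · have hn : (0:ℝ) ≤ |s - s'| ^ (-(3 / 2) : ℝ) * (ρ s * ρ s') :=
        mul_nonneg (by positivity) (mul_nonneg (hρ0 s) (hρ0 s'))
      refine (ENNReal.ofReal_le_ofReal_iff hn).1 (b1.trans ?_)
      rw [ENNReal.ofReal_mul (by positivity), ENNReal.ofReal_mul (hρ0 s),
        show t - s - (t - s') = -(s - s') by ring, abs_neg]
      gcongr
      · exact h1 s hs
      · exact h1 s' hs'
    · have hn : (0:ℝ) ≤ 2 * (ρ s * ρ s') ^ (-(1 / 2) : ℝ) := by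
        have := mul_nonneg (hρ0 s) (hρ0 s')
        positivity
      refine (ENNReal.ofReal_le_ofReal_iff hn).1 (b2.trans ?_)
      have e : ∀ u ∈ J, (∫⁻ x, ‖φ u x‖ₑ ^ 2) ^ (1 / 2 : ℝ) ≤
          ENNReal.ofReal (ρ u ^ (-(1 / 2) : ℝ)) := by
        intro u hu
        refine (ENNReal.rpow_le_rpow (h2 u hu) (by norm_num)).trans ?_
        rw [ENNReal.ofReal_rpow_of_nonneg (by have := hρ0 u; positivity) (by norm_num)]
        apply ENNReal.ofReal_le_ofReal
        rw [one_div, Real.inv_rpow (hρ0 u), Real.rpow_neg (hρ0 u)]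
      rw [ENNReal.ofReal_mul (by norm_num), Real.mul_rpow (hρ0 s) (hρ0 s'),
        ENNReal.ofReal_mul (Real.rpow_nonneg (hρ0 s) _)]
      have := e s hs
      have := e s' hs'
      rw [show ENNReal.ofReal 2 = 2 by simp]
      gcongr
  have mP : Measurable (fun p : ℝ × ℝ => Psi (ρ p.1) (p.1 - p.2)) :=
    Psi_meas.comp ((hρ.comp measurable_fst).prodMk (measurable_fst.sub measurable_snd))
  have mP' : Measurable (fun p : ℝ × ℝ => Psi (ρ p.2) (p.1 - p.2)) :=
    Psi_meas.comp ((hρ.comp measurable_snd).prodMk (measurable_fst.sub measurable_snd))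
  have i1 : ∀ s, ∫⁻ s' in J, Psi (ρ s) (s - s') ≤ 12 * ENNReal.ofReal (ρ s) := by
    intro s
    refine (setLIntegral_le_lintegral _ _).trans ?_
    rw [lintegral_sub_left_eq_self (fun x => Psi (ρ s) x) s]
    refine (Psi_int (hρ0 s)).trans ?_
    rw [ENNReal.ofReal_mul (by norm_num)]; simp
  have i2 : ∀ s', ∫⁻ s in J, Psi (ρ s') (s - s') ≤ 12 * ENNReal.ofReal (ρ s') := by
    intro s'
    refine le_trans (le_of_eq ?_) (i1 s')
    refine lintegral_congr fun s => ?_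
    rw [← Psi_neg, neg_sub]
  calc _ ≤ ∫⁻ s in J, ∫⁻ s' in J, (Psi (ρ s) (s - s') + Psi (ρ s') (s - s')) := by
        refine setLIntegral_mono_ae' hJ (Filter.Eventually.of_forall fun s hs => ?_)
        refine setLIntegral_mono_ae' hJ ?_
        have : ∀ᵐ s' : ℝ, s' ≠ s := by
          simp [ae_iff, measure_singleton]
        filter_upwards [this] with s' hne hs' using key s hs s' hs' hne.symm
    _ = (∫⁻ s in J, ∫⁻ s' in J, Psi (ρ s) (s - s')) +
          ∫⁻ s in J, ∫⁻ s' in J, Psi (ρ s') (s - s') := by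
        rw [← lintegral_add_left mP.lintegral_prod_right']
        refine lintegral_congr fun s => ?_
        rw [lintegral_add_left]
        exact mP.comp (measurable_const.prodMk measurable_id)
    _ ≤ (∫⁻ s in J, 12 * ENNReal.ofReal (ρ s)) + ∫⁻ s in J, 12 * ENNReal.ofReal (ρ s) := by
        gcongr ?_ + ?_
        · exact lintegral_mono fun s => i1 s
        · rw [lintegral_lintegral_swap mP'.aemeasurable]
          exact lintegral_mono fun s => i2 s
    _ = _ := by
        rw [lintegral_const_mul _ (by fun_prop), ← add_mul]; norm_num

lemma dualF {t : ℝ} (ht : 0 < t) {J : Set ℝ} (hJ : MeasurableSet J)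
    (hJt : J ⊆ Iic (t / 2)) {φ : ℝ → V3 → ℂ} (hφ : Measurable (Function.uncurry φ))
    (hφi : Integrable (Function.uncurry φ) ((volume.restrict J).prod volume))
    {g : V3 → ℂ} (hg : Measurable g) (hgi : Integrable g) :
    ∫ p, φ p.1 p.2 * Sf (t - p.1) g p.2 ∂((volume.restrict J).prod volume) =
      ∫ y, g y * ∫ s in J, Sf (t - s) (φ s) y := by
  have hae : ∀ᵐ p ∂((volume.restrict J).prod (volume : Measure V3)), p.1 ∈ J :=
    Measure.quasiMeasurePreserving_fst.ae (ae_restrict_mem hJ)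
  have hI1 : ∀ y, Integrable (fun p : ℝ × V3 => Ker (t - p.1) y p.2 * φ p.1 p.2)
      ((volume.restrict J).prod volume) := by
    intro y
    refine (hφi.norm.const_mul (Dt t)).mono' ?_ ?_
    · have m1 : Measurable (fun p : ℝ × V3 => Ker (t - p.1) y p.2) :=
        Ker_comp (by fun_prop) (by fun_prop) (by fun_prop)
      exact (m1.mul hφ).aestronglyMeasurable
    · filter_upwards [hae] with p hp
      rw [norm_mul]
      exact mul_le_mul_of_nonneg_right (norm_Ker_le ht (hJt hp) _ _) (norm_nonneg _)
  have e1 : ∀ y, g y * ∫ s in J, Sf (t - s) (φ s) y =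
      ∫ p : ℝ × V3, g y * (Ker (t - p.1) y p.2 * φ p.1 p.2) ∂((volume.restrict J).prod volume) := by
    intro y
    rw [integral_const_mul, integral_prod _ (hI1 y)]
    rfl
  simp only [e1]
  rw [integral_integral_swap]
  · refine integral_congr_ae (Filter.Eventually.of_forall fun p => ?_)
    simp only [Sf]
    rw [← integral_const_mul]
    congr 1; ext y
    rw [Ker_symm (t - p.1) y p.2]; ring
  · have hh := (hgi.norm.mul_prod (hφi.norm)).const_mul (Dt t)
    refine hh.mono' ?_ ?_
    · have m1 : Measurable (fun q : V3 × (ℝ × V3) => Ker (t - q.2.1) q.1 q.2.2) :=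
        Ker_comp (by fun_prop) (by fun_prop) (by fun_prop)
      have m2 : Measurable (fun q : V3 × (ℝ × V3) => φ q.2.1 q.2.2) := hφ.comp measurable_snd
      exact ((hg.comp measurable_fst).mul (m1.mul m2)).aestronglyMeasurable
    · have : ∀ᵐ q ∂((volume : Measure V3).prod ((volume.restrict J).prod (volume : Measure V3))),
        q.2.1 ∈ J := Measure.quasiMeasurePreserving_snd.ae hae
      filter_upwards [this] with q hq
      simp only [Function.uncurry, norm_mul]
      have := norm_Ker_le ht (hJt hq) q.1 q.2.2
      calc ‖g q.1‖ * (‖Ker (t - q.2.1) q.1 q.2.2‖ * ‖φ q.2.1 q.2.2‖) ≤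
          ‖g q.1‖ * (Dt t * ‖φ q.2.1 q.2.2‖) := by gcongr
        _ = _ := by ring

lemma Sf_bound {t s : ℝ} (ht : 0 < t) (hs : s ≤ t / 2) {f : V3 → ℂ} (hf : Integrable f) (x : V3) :
    ‖Sf (t - s) f x‖ ≤ Dt t * ∫ y, ‖f y‖ := by
  unfold Sf
  refine (norm_integral_le_integral_norm _).trans ?_
  rw [← integral_const_mul]
  refine integral_mono_of_nonneg (Filter.Eventually.of_forall fun y => norm_nonneg _)
    (hf.norm.const_mul _) (Filter.Eventually.of_forall fun y => ?_)
  simp only [norm_mul]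
  exact mul_le_mul_of_nonneg_right (norm_Ker_le ht hs _ _) (norm_nonneg _)

lemma le_gam {R : ℝ} (hR : 0 < R) {f : V3 → ℝ≥0∞} (hf : Measurable f)
    (h0 : ∀ x, R < ‖x‖ → f x = 0) : ∫⁻ x, f x ≤ 3 * ∫⁻ x, f x ∂(gam (1 / R ^ 2)) := by
  unfold gam
  rw [lintegral_withDensity_eq_lintegral_mul _ (by fun_prop) hf,
    ← lintegral_const_mul _ (by fun_prop)]
  refine lintegral_mono fun x => ?_
  by_cases h : R < ‖x‖
  · simp [h0 x h]
  push Not at h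
  have : (1 : ℝ≥0∞) ≤ 3 * ENNReal.ofReal (Real.exp (-(1 / R ^ 2) * ‖x‖ ^ 2)) := by
    rw [show (3 : ℝ≥0∞) = ENNReal.ofReal 3 by simp, ← ENNReal.ofReal_mul (by norm_num),
      ENNReal.one_le_ofReal]
    have h1 : (1 / R ^ 2) * ‖x‖ ^ 2 ≤ 1 := by
      rw [one_div_mul_eq_div, div_le_one (by positivity)]
      gcongr
    have h2 : Real.exp (-1) ≤ Real.exp (-(1 / R ^ 2) * ‖x‖ ^ 2) :=
      Real.exp_le_exp.2 (by linarith)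
    have h3 : 1 / 3 ≤ Real.exp (-1) := by
      rw [Real.exp_neg, ← one_div]
      apply one_div_le_one_div_of_le (Real.exp_pos _)
      have := Real.exp_one_lt_d9; linarith
    linarith
  calc f x = 1 * f x := (one_mul _).symm
    _ ≤ _ := mul_le_mul_left this _
    _ = _ := by rw [mul_assoc]; rfl

lemma gam_le {R : ℝ} {f : V3 → ℝ≥0∞} (hf : Measurable f) :
    ∫⁻ x, f x ∂(gam (1 / R ^ 2)) ≤ ∫⁻ x, f x := by
  unfold gam
  rw [lintegral_withDensity_eq_lintegral_mul _ (by fun_prop) hf]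
  refine lintegral_mono fun x => ?_
  have : ENNReal.ofReal (Real.exp (-(1 / R ^ 2) * ‖x‖ ^ 2)) ≤ 1 := by
    rw [ENNReal.ofReal_le_one, Real.exp_le_one_iff]
    have : 0 ≤ 1 / R ^ 2 * ‖x‖ ^ 2 := by positivity
    linarith
  simpa using mul_le_mul_left this (f x)

open ComplexConjugate in
lemma weakDual {t ν R R' : ℝ} (ht : 0 < t) (hν : 0 < ν) (hR : 0 < R) {J : Set ℝ}
    (hJ : MeasurableSet J) (hJt : J ⊆ Icc 0 (t / 2)) {g : V3 → ℂ} (hg : Measurable g)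
    (hgi : Integrable g) (hgs : ∀ x, R < ‖x‖ → g x = 0) {E : Set (ℝ × V3)} (hEm : MeasurableSet E)
    (hE : ∀ p ∈ E, p.1 ∈ J ∧ ‖p.2‖ ≤ R' ∧ ν < ‖Sf (t - p.1) g p.2‖) :
    ENNReal.ofReal ν ^ 2 * ∫⁻ s in J, (volume (Prod.mk s ⁻¹' E)) ^ (1 / 3 : ℝ) ≤
      216 * ∫⁻ x, ‖g x‖ₑ ^ 2 := by
  classical
  have hJt' : J ⊆ Iic (t / 2) := fun s hs => (hJt hs).2
  have hJfin : volume J < ∞ := (measure_mono hJt).trans_lt (by simp)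
  set m : ℝ → ℝ≥0∞ := fun s => volume (Prod.mk s ⁻¹' E) with hm
  have hmm : Measurable m := measurable_measure_prodMk_left hEm
  have hmB : ∀ s, m s ≤ volume (Metric.closedBall (0 : V3) R') := by
    intro s
    apply measure_mono
    intro x hx
    simpa using (hE _ hx).2.1
  have hBf : volume (Metric.closedBall (0 : V3) R') < ∞ := measure_closedBall_lt_top
  have hmf : ∀ s, m s ≠ ∞ := fun s => ((hmB s).trans_lt hBf).ne
  set ρ : ℝ → ℝ := fun s => (m s).toReal ^ (1 / 3 : ℝ) with hρd
  have hρ : Measurable ρ := by fun_prop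
  have hρ0 : ∀ s, 0 ≤ ρ s := fun s => by positivity
  have hρm : ∀ s, ENNReal.ofReal (ρ s) = m s ^ (1 / 3 : ℝ) := by
    intro s
    simp only [hρd]
    rw [← ENNReal.ofReal_rpow_of_nonneg ENNReal.toReal_nonneg (by norm_num),
      ENNReal.ofReal_toReal (hmf s)]
  have hρ3 : ∀ s, m s = ENNReal.ofReal (ρ s ^ 3) := by
    intro s
    simp only [hρd]
    rw [← Real.rpow_natCast, ← Real.rpow_mul ENNReal.toReal_nonneg]
    norm_num
    rw [ENNReal.ofReal_toReal (hmf s)]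
  have hGle : ∫⁻ s in J, ENNReal.ofReal (ρ s) < ∞ := by
    refine (lintegral_mono (g := fun _ => (volume (Metric.closedBall (0 : V3) R')) ^ (1 / 3 : ℝ))
      fun s => ?_).trans_lt ?_
    · rw [hρm]; exact ENNReal.rpow_le_rpow (hmB s) (by norm_num)
    · rw [setLIntegral_const]
      exact ENNReal.mul_lt_top (ENNReal.rpow_lt_top_of_nonneg (by norm_num) hBf.ne) hJfin
  have hρi : IntegrableOn ρ J := by
    refine ⟨hρ.aestronglyMeasurable, ?_⟩
    rw [hasFiniteIntegral_iff_ofReal (Filter.Eventually.of_forall hρ0)]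
    exact hGle
  set w : ℝ → V3 → ℂ := fun s x => Sf (t - s) g x with hw
  have hwm : Measurable (Function.uncurry w) :=
    SfT_meas t (φ := fun _ => g) (hg.comp measurable_snd)
  set φ : ℝ → V3 → ℂ := fun s x =>
    E.indicator (fun p : ℝ × V3 => (((ρ p.1 ^ 2)⁻¹ / ‖w p.1 p.2‖ : ℝ) : ℂ) * conj (w p.1 p.2)) (s, x)
    with hφd
  have hφ : Measurable (Function.uncurry φ) := by
    have m1 : Measurable (fun p : ℝ × V3 => w p.1 p.2) := hwm
    refine Measurable.indicator (Measurable.mul ?_ (Complex.continuous_conj.measurable.comp m1)) hEm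
    exact Complex.measurable_ofReal.comp ((((hρ.comp measurable_fst).pow_const 2).inv).div m1.norm)
  have hφn : ∀ s x, ‖φ s x‖ₑ = (Prod.mk s ⁻¹' E).indicator
      (fun _ => ENNReal.ofReal ((ρ s ^ 2)⁻¹)) x := by
    intro s x
    by_cases h : (s, x) ∈ E
    · have hp : 0 < ‖w s x‖ := hν.trans (hE _ h).2.2
      rw [indicator_of_mem (show x ∈ Prod.mk s ⁻¹' E from h)]
      simp only [hφd]
      rw [indicator_of_mem h, ← ofReal_norm]
      congr 1
      rw [norm_mul, RCLike.norm_conj, Complex.norm_real, Real.norm_eq_abs, abs_of_nonneg (by positivity)]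
      field_simp
    · rw [indicator_of_notMem (show x ∉ Prod.mk s ⁻¹' E from h)]
      simp only [hφd]
      rw [indicator_of_notMem h, enorm_zero]
  have hEs : ∀ s, MeasurableSet (Prod.mk s ⁻¹' E) := fun s => measurable_prodMk_left hEm
  have h1 : ∀ s, ∫⁻ x, ‖φ s x‖ₑ = ENNReal.ofReal (ρ s) := by
    intro s
    simp only [hφn]
    rw [lintegral_indicator_const (hEs s)]
    change _ * m s = _
    rw [hρ3, ← ENNReal.ofReal_mul (by positivity)]
    congr 1
    rcases (hρ0 s).eq_or_lt with h | h
    · rw [← h]; simp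
    · field_simp
  have h2 : ∀ s, ∫⁻ x, ‖φ s x‖ₑ ^ 2 = ENNReal.ofReal (1 / ρ s) := by
    intro s
    have : ∀ x, ‖φ s x‖ₑ ^ 2 = (Prod.mk s ⁻¹' E).indicator
      (fun _ => ENNReal.ofReal ((ρ s ^ 2)⁻¹) ^ 2) x := by
      intro x
      rw [hφn]
      by_cases h : x ∈ Prod.mk s ⁻¹' E
      · rw [indicator_of_mem h, indicator_of_mem h]
      · rw [indicator_of_notMem h, indicator_of_notMem h]; simp
    simp only [this]
    rw [lintegral_indicator_const (hEs s)]
    change _ * m s = _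
    rw [hρ3, ← ENNReal.ofReal_pow (by positivity), ← ENNReal.ofReal_mul (by positivity)]
    congr 1
    rcases (hρ0 s).eq_or_lt with h | h
    · rw [← h]; simp
    · field_simp
  have hφi : Integrable (Function.uncurry φ) ((volume.restrict J).prod volume) := by
    refine ⟨hφ.aestronglyMeasurable, ?_⟩
    rw [hasFiniteIntegral_iff_enorm, lintegral_prod _ hφ.enorm.aemeasurable]
    simp only [Function.uncurry, h1]
    exact hGle
  have hdual := dualF ht hJ hJt' hφ hφi hg hgi
  have hae : ∀ᵐ p ∂((volume.restrict J).prod (volume : Measure V3)), p.1 ∈ J :=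
    Measure.quasiMeasurePreserving_fst.ae (ae_restrict_mem hJ)
  have hφw : ∀ s x, φ s x * w s x = ((‖φ s x‖ * ‖w s x‖ : ℝ) : ℂ) := by
    intro s x
    by_cases h : (s, x) ∈ E
    · have hp : 0 < ‖w s x‖ := hν.trans (hE _ h).2.2
      simp only [hφd]
      rw [indicator_of_mem h, norm_mul, RCLike.norm_conj, Complex.norm_real, Real.norm_eq_abs,
        abs_of_nonneg (by positivity), mul_assoc, mul_comm (conj (w s x)), Complex.mul_conj,
        Complex.normSq_eq_norm_sq, ← Complex.ofReal_mul]
      congr 1; ring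
    · simp only [hφd]
      rw [indicator_of_notMem h]; simp
  have hIr : Integrable (fun p : ℝ × V3 => ‖φ p.1 p.2‖ * ‖w p.1 p.2‖)
      ((volume.restrict J).prod volume) := by
    refine (hφi.norm.mul_const (Dt t * ∫ y, ‖g y‖)).mono'
      (hφ.norm.mul hwm.norm).aestronglyMeasurable ?_
    filter_upwards [hae] with p hp
    rw [Real.norm_eq_abs, abs_of_nonneg (by positivity)]
    exact mul_le_mul_of_nonneg_left (Sf_bound ht (hJt' hp) hgi _) (norm_nonneg _)
  set G := ∫⁻ s in J, (m s) ^ (1 / 3 : ℝ) with hG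
  have hGfin : G ≠ ∞ := by
    have := hGle.ne
    simpa only [hρm] using this
  have low : ENNReal.ofReal ν * G ≤
      ‖∫ p, φ p.1 p.2 * Sf (t - p.1) g p.2 ∂((volume.restrict J).prod volume)‖ₑ := by
    have e1 : ∫ p, φ p.1 p.2 * Sf (t - p.1) g p.2 ∂((volume.restrict J).prod volume) =
        ((∫ p, ‖φ p.1 p.2‖ * ‖w p.1 p.2‖ ∂((volume.restrict J).prod volume) : ℝ) : ℂ) := by
      rw [← integral_complex_ofReal]
      refine integral_congr_ae (Filter.Eventually.of_forall fun p => ?_)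
      exact hφw p.1 p.2
    rw [e1, ← ofReal_norm, Complex.norm_real, Real.norm_eq_abs,
      abs_of_nonneg (integral_nonneg fun p => by positivity),
      ofReal_integral_eq_lintegral_ofReal hIr (Filter.Eventually.of_forall fun p => by positivity),
      lintegral_prod]
    · rw [hG, ← lintegral_const_mul _ (by fun_prop)]
      refine lintegral_mono fun s => ?_
      rw [← hρm, ← h1, ← lintegral_const_mul _ (by exact (hφ.of_uncurry_left).enorm)]
      refine lintegral_mono fun x => ?_
      rw [← ofReal_norm, ← ENNReal.ofReal_mul hν.le]
      apply ENNReal.ofReal_le_ofReal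
      by_cases h : (s, x) ∈ E
      · have hp : ν < ‖w s x‖ := (hE _ h).2.2
        rw [mul_comm]
        gcongr
      · have : φ s x = 0 := by simp only [hφd]; rw [indicator_of_notMem h]
        simp [this]
    · exact (hφ.norm.mul hwm.norm).ennreal_ofReal.aemeasurable
  rw [hdual] at low
  set N := ∫⁻ x, ‖g x‖ₑ ^ 2 with hN
  have hTm : Measurable (fun y => ∫ s in J, Sf (t - s) (φ s) y) := by
    have : StronglyMeasurable (fun p : V3 × ℝ => Sf (t - p.2) (φ p.2) p.1) :=
      ((SfT_meas t hφ).comp measurable_swap).stronglyMeasurable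
    exact this.integral_prod_right'.measurable
  have up : ENNReal.ofReal ν * G ≤ 3 * (N ^ (1 / 2 : ℝ) * (24 * G) ^ (1 / 2 : ℝ)) := by
    refine (low.trans (enorm_integral_le_lintegral_enorm _)).trans ?_
    refine (le_gam hR (hg.mul hTm).enorm (fun x hx => by simp [hgs x hx])).trans ?_
    gcongr
    simp only [Pi.mul_apply, enorm_mul]
    refine (lintegral_CS _ hg.enorm.aemeasurable hTm.enorm.aemeasurable).trans ?_
    gcongr
    · exact gam_le (hg.enorm.pow_const 2)
    · have := weakStr ht (show 0 < 1 / R ^ 2 by positivity) hJ hJt' hφ hρ hρ0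
        (fun s _ => (h1 s).le) (fun s _ => (h2 s).le) hρi
      simpa only [hρm] using this
  have sq : (ENNReal.ofReal ν ^ 2 * G) * G ≤ (216 * N) * G := by
    calc _ = (ENNReal.ofReal ν * G) ^ 2 := by ring
      _ ≤ (3 * (N ^ (1 / 2 : ℝ) * (24 * G) ^ (1 / 2 : ℝ))) ^ 2 := by gcongr
      _ = _ := by
        rw [mul_pow, mul_pow, ← ENNReal.rpow_natCast (N ^ _), ← ENNReal.rpow_natCast ((24 * G) ^ _),
          ← ENNReal.rpow_mul, ← ENNReal.rpow_mul]
        norm_num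
        ring
  rcases eq_or_ne G 0 with h | h
  · rw [h]; simp
  · exact (ENNReal.mul_le_mul_iff_left h hGfin).1 sq

lemma layer {α : Type*} [MeasurableSpace α] (μ : Measure α) {f : α → ℝ} (hf0 : ∀ x, 0 ≤ f x)
    (hf : Measurable f) {r : ℝ} (hr : 0 < r) :
    (∫⁻ x, ENNReal.ofReal (f x ^ (3 * r)) ∂μ) ^ (1 / 3 : ℝ) ≤
      ENNReal.ofReal (3 * r ^ 3) ^ (1 / 3 : ℝ) *
        ∫⁻ ν in Ioi 0, μ {x | ν < f x} ^ (1 / 3 : ℝ) * ENNReal.ofReal (ν ^ (r - 1)) := by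
  set h : ℝ → ℝ≥0∞ := fun ν => μ {x | ν < f x} ^ (1 / 3 : ℝ) with hh
  have hanti : Antitone h := by
    intro a b hab
    refine ENNReal.rpow_le_rpow (measure_mono fun x hx => ?_) (by norm_num)
    exact lt_of_le_of_lt hab hx
  have hm : Measurable h := hanti.measurable
  set Φ := ∫⁻ ν in Ioi 0, h ν * ENNReal.ofReal (ν ^ (r - 1)) with hΦ
  have key : ∀ a : ℝ, 0 < a → h a * ENNReal.ofReal (a ^ r) ≤ ENNReal.ofReal r * Φ := by
    intro a ha
    have h1 : h a * ENNReal.ofReal (a ^ r / r) ≤ Φ := by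
      have := lintegral_rpow_Ioc (p := r - 1) (b := a) (by linarith) ha.le
      rw [sub_add_cancel] at this
      rw [← this, ← lintegral_const_mul _ (by fun_prop)]
      refine (setLIntegral_mono (by fun_prop) (g := fun ν => h ν * ENNReal.ofReal (ν ^ (r - 1)))
        fun ν hν => ?_).trans (lintegral_mono_set Ioc_subset_Ioi_self)
      exact mul_le_mul_left (hanti hν.2) _
    calc h a * ENNReal.ofReal (a ^ r) = ENNReal.ofReal r * (h a * ENNReal.ofReal (a ^ r / r)) := by
          rw [mul_left_comm, ← ENNReal.ofReal_mul hr.le]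
          congr 2; field_simp
      _ ≤ _ := by gcongr
  have hcube : ∀ ν, μ {x | ν < f x} = h ν ^ 3 := by
    intro ν
    simp only [hh]
    rw [← ENNReal.rpow_natCast, ← ENNReal.rpow_mul]; norm_num
  have main : ∫⁻ x, ENNReal.ofReal (f x ^ (3 * r)) ∂μ ≤ ENNReal.ofReal (3 * r ^ 3) * Φ ^ 3 := by
    rw [lintegral_rpow_eq_lintegral_meas_lt_mul μ (Filter.Eventually.of_forall hf0)
      hf.aemeasurable (by positivity : 0 < 3 * r)]
    calc _ ≤ ENNReal.ofReal (3 * r) * ∫⁻ ν in Ioi 0, (ENNReal.ofReal r * Φ) ^ 2 *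
            (h ν * ENNReal.ofReal (ν ^ (r - 1))) := by
          gcongr ENNReal.ofReal (3 * r) * ?_
          refine setLIntegral_mono' measurableSet_Ioi fun ν hν => ?_
          have hν : 0 < ν := hν
          rw [hcube]
          calc h ν ^ 3 * ENNReal.ofReal (ν ^ (3 * r - 1)) =
              (h ν * ENNReal.ofReal (ν ^ r)) ^ 2 * (h ν * ENNReal.ofReal (ν ^ (r - 1))) := by
                have : ν ^ (3 * r - 1) = (ν ^ r) ^ 2 * ν ^ (r - 1) := by
                  rw [← Real.rpow_natCast, ← Real.rpow_mul hν.le, ← Real.rpow_add hν]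
                  congr 1; push_cast; ring
                rw [this, ENNReal.ofReal_mul (by positivity), ENNReal.ofReal_pow (by positivity)]
                ring
            _ ≤ _ := by
                gcongr ?_ ^ 2 * _
                exact key ν hν
      _ = _ := by
          rw [lintegral_const_mul _ (by fun_prop), ← hΦ]
          rw [show 3 * r ^ 3 = 3 * r * r ^ 2 by ring, ENNReal.ofReal_mul (q := r ^ 2) (by positivity),
            ENNReal.ofReal_pow hr.le]
          ring
  calc _ ≤ (ENNReal.ofReal (3 * r ^ 3) * Φ ^ 3) ^ (1 / 3 : ℝ) := by gcongr
    _ = _ := by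
      rw [ENNReal.mul_rpow_of_nonneg _ _ (by norm_num), ← ENNReal.rpow_natCast, ← ENNReal.rpow_mul]
      norm_num

lemma tail_small {t X r μ : ℝ} (ht : 0 < t) (hX : 0 < X) (hr : 2 < r) (hμ : 0 < μ)
    {g : V3 → ℂ} (hgX : ∫⁻ x, ENNReal.ofReal (‖g x‖ ^ (r / (r - 1))) ≤ ENNReal.ofReal X)
    {s : ℝ} (hs : s ≤ t / 2) (x : V3) :
    ‖Sf (t - s) ({y | (2 * Dt t * X / μ) ^ (r - 1) < ‖g y‖}.indicator g) x‖ ≤ μ / 2 := by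
  have hD := Dt_pos ht
  have hr1 : 0 < r - 1 := by linarith
  set lam := (2 * Dt t * X / μ) ^ (r - 1) with hl
  have hlam : 0 < lam := by positivity
  have h := enorm_Sf_le ht hs ({y | lam < ‖g y‖}.indicator g) x
  have hb : ∀ y, ‖{y | lam < ‖g y‖}.indicator g y‖ₑ ≤
      ENNReal.ofReal (μ / (2 * Dt t * X)) * ENNReal.ofReal (‖g y‖ ^ (r / (r - 1))) := by
    intro y
    by_cases hy : y ∈ {y | lam < ‖g y‖}
    · rw [indicator_of_mem hy, ← ofReal_norm, ← ENNReal.ofReal_mul (by positivity)]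
      apply ENNReal.ofReal_le_ofReal
      have hy : lam < ‖g y‖ := hy
      have hg0 : 0 < ‖g y‖ := hlam.trans hy
      have e : ‖g y‖ = ‖g y‖ ^ (-(1 / (r - 1))) * ‖g y‖ ^ (r / (r - 1)) := by
        rw [← Real.rpow_add hg0]
        rw [show -(1 / (r - 1)) + r / (r - 1) = 1 by field_simp; ring, Real.rpow_one]
      have e2 : ‖g y‖ ^ (-(1 / (r - 1))) ≤ lam ^ (-(1 / (r - 1))) :=
        Real.rpow_le_rpow_of_nonpos hlam hy.le (by
          have : 0 < 1 / (r - 1) := by positivity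
          linarith)
      have e3 : lam ^ (-(1 / (r - 1))) = μ / (2 * Dt t * X) := by
        rw [hl, ← Real.rpow_mul (by positivity)]
        rw [show (r - 1) * -(1 / (r - 1)) = -1 by field_simp, Real.rpow_neg_one, inv_div]
      rw [e3] at e2
      nth_rewrite 1 [e]
      gcongr
    · rw [indicator_of_notMem hy]; simp
  have h2 : ∫⁻ y, ‖{y | lam < ‖g y‖}.indicator g y‖ₑ ≤
      ENNReal.ofReal (μ / (2 * Dt t * X)) * ENNReal.ofReal X := by
    refine (lintegral_mono hb).trans ?_
    rw [lintegral_const_mul' _ _ ENNReal.ofReal_ne_top]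
    gcongr
  have h3 := h.trans (mul_le_mul_right h2 _)
  rw [← ENNReal.ofReal_mul (by positivity), ← ENNReal.ofReal_mul (by positivity),
    ← ofReal_norm] at h3
  have h4 := (ENNReal.ofReal_le_ofReal_iff (by positivity)).1 h3
  refine h4.trans (le_of_eq ?_)
  field_simp

lemma realInterp {t X r R R' : ℝ} (ht : 0 < t) (hX : 0 < X) (hr : 2 < r) (hR : 0 < R)
    {I : Set ℝ} (hI : MeasurableSet I) (hIt : I ⊆ Icc 0 (t / 2)) {g : V3 → ℂ} (hg : Measurable g)
    (hgi : Integrable g) (hgs : ∀ x, R < ‖x‖ → g x = 0)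
    (hgX : ∫⁻ x, ENNReal.ofReal (‖g x‖ ^ (r / (r - 1))) ≤ ENNReal.ofReal X) :
    ∫⁻ s in I, (∫⁻ x in Metric.closedBall 0 R', ENNReal.ofReal (‖Sf (t - s) g x‖ ^ (3 * r)))
        ^ (1 / 3 : ℝ) ≤
      ENNReal.ofReal (3 * r ^ 3) ^ (1 / 3 : ℝ) *
        ENNReal.ofReal (864 * (2 * Dt t * X) ^ (r - 2) / (r - 2) * X) := by
  have hD := Dt_pos ht
  have hr1 : 0 < r - 1 := by linarith
  set B := Metric.closedBall (0 : V3) R' with hB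
  have hBm : MeasurableSet B := measurableSet_closedBall
  have hwm : Measurable (fun p : ℝ × V3 => Sf (t - p.1) g p.2) :=
    SfT_meas t (φ := fun _ => g) (hg.comp measurable_snd)
  have hIt' : ∀ s ∈ I, s ≤ t / 2 := fun s hs => (hIt hs).2
  set lam : ℝ → ℝ := fun μ => (2 * Dt t * X / μ) ^ (r - 1) with hl
  have hlm : Measurable lam := by fun_prop
  set m : ℝ → ℝ → ℝ≥0∞ := fun s μ => (volume.restrict B) {x | μ < ‖Sf (t - s) g x‖} with hmd
  have hmm : Measurable (fun p : ℝ × ℝ => m p.1 p.2) := by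
    have : MeasurableSet {q : (ℝ × ℝ) × V3 | q.1.2 < ‖Sf (t - q.1.1) g q.2‖} :=
      measurableSet_lt (by fun_prop)
        (hwm.comp ((measurable_fst.comp measurable_fst).prodMk measurable_snd)).norm
    exact measurable_measure_prodMk_left this
  -- step 1: layer cake
  have s1 : ∫⁻ s in I, (∫⁻ x in B, ENNReal.ofReal (‖Sf (t - s) g x‖ ^ (3 * r)))
        ^ (1 / 3 : ℝ) ≤ ENNReal.ofReal (3 * r ^ 3) ^ (1 / 3 : ℝ) *
        ∫⁻ s in I, ∫⁻ μ in Ioi 0, m s μ ^ (1 / 3 : ℝ) * ENNReal.ofReal (μ ^ (r - 1)) := by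
    rw [← lintegral_const_mul']
    · refine lintegral_mono fun s => ?_
      exact layer (volume.restrict B) (fun x => norm_nonneg _) (Sf_meas _ hg).norm (by linarith)
    · exact ENNReal.rpow_ne_top_of_nonneg (by norm_num) ENNReal.ofReal_ne_top
  refine s1.trans ?_
  gcongr
  have mm2 : Measurable (fun p : ℝ × ℝ => m p.1 p.2 ^ (1 / 3 : ℝ) * ENNReal.ofReal (p.2 ^ (r - 1))) := by
    fun_prop
  rw [lintegral_lintegral_swap mm2.aemeasurable]
  -- step 2: for each level
  have s2 : ∀ μ ∈ Ioi (0 : ℝ), ∫⁻ s in I, m s μ ^ (1 / 3 : ℝ) * ENNReal.ofReal (μ ^ (r - 1)) ≤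
      864 * ∫⁻ x, ({x | ‖g x‖ ≤ lam μ}.indicator (fun x => ‖g x‖ₑ ^ 2) x) *
        ENNReal.ofReal (μ ^ (r - 3)) := by
    intro μ hμ
    have hμ : 0 < μ := hμ
    have hmeasle : MeasurableSet {x | ‖g x‖ ≤ lam μ} := measurableSet_le hg.norm measurable_const
    have hmeaslt : MeasurableSet {x | lam μ < ‖g x‖} := measurableSet_lt measurable_const hg.norm
    set g1 := {x | ‖g x‖ ≤ lam μ}.indicator g with hg1
    set g2 := {x | lam μ < ‖g x‖}.indicator g with hg2
    have hsum : ∀ s x, Sf (t - s) g x = Sf (t - s) g1 x + Sf (t - s) g2 x ∨ t / 2 < s := by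
      intro s x
      by_cases hs : t / 2 < s
      · exact Or.inr hs
      · left
        push Not at hs
        have hi : ∀ f : V3 → ℂ, Integrable f → Integrable (fun y => Ker (t - s) x y * f y) := by
          intro f hf
          refine hf.bdd_mul (c := Dt t) ?_ (Filter.Eventually.of_forall fun y => norm_Ker_le ht hs x y)
          exact (Ker_comp (by fun_prop) (by fun_prop) (by fun_prop) :
            Measurable fun y => Ker (t - s) x y).aestronglyMeasurable
        unfold Sf
        rw [← integral_add (hi _ (hgi.indicator hmeasle)) (hi _ (hgi.indicator hmeaslt))]
        congr 1; ext y
        rw [← mul_add]; congr 1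
        by_cases hy : ‖g y‖ ≤ lam μ
        · rw [indicator_of_mem (show y ∈ {x | ‖g x‖ ≤ lam μ} from hy),
            indicator_of_notMem (show y ∉ {x | lam μ < ‖g x‖} from not_lt.2 hy), add_zero]
        · rw [indicator_of_notMem (show y ∉ {x | ‖g x‖ ≤ lam μ} from hy),
            indicator_of_mem (show y ∈ {x | lam μ < ‖g x‖} from not_le.1 hy), zero_add]
    set E : Set (ℝ × V3) := {p | p.1 ∈ I ∧ p.2 ∈ B ∧ μ < ‖Sf (t - p.1) g p.2‖} with hE
    have hEm : MeasurableSet E :=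
      (measurable_fst hI).inter ((measurable_snd hBm).inter
        (measurableSet_lt measurable_const hwm.norm))
    have hw := weakDual (ν := μ / 2) (R := R) (R' := R') ht (by positivity) hR hI hIt
      (g := g1) (hg.indicator hmeasle) (hgi.indicator hmeasle) (fun x hx => by
        rw [hg1]; simp [indicator, hgs x hx]) hEm (by
        rintro p ⟨hp1, hp2, hp3⟩
        refine ⟨hp1, by simpa [hB] using hp2, ?_⟩
        have h1 := (hsum p.1 p.2).resolve_right (not_lt.2 (hIt' _ hp1))
        have h2 := tail_small ht hX hr hμ hgX (hIt' _ hp1) p.2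
        rw [h1] at hp3
        have h3 := norm_add_le (Sf (t - p.1) g1 p.2) (Sf (t - p.1) g2 p.2)
        change ‖Sf (t - p.1) g2 p.2‖ ≤ μ / 2 at h2
        linarith)
    have hEs : ∀ s ∈ I, volume (Prod.mk s ⁻¹' E) = m s μ := by
      intro s hs
      simp only [hmd]
      rw [Measure.restrict_apply (measurableSet_lt measurable_const (Sf_meas _ hg).norm)]
      congr 1
      ext x
      simp [hE, hs, and_comm]
    rw [setLIntegral_congr_fun hI (g := fun s => m s μ ^ (1 / 3 : ℝ))
      (fun s hs => by simp only [hEs s hs])] at hw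
    have hN : ∫⁻ x, ‖g1 x‖ₑ ^ 2 =
        ∫⁻ x, ({x | ‖g x‖ ≤ lam μ}.indicator (fun x => ‖g x‖ₑ ^ 2) x) := by
      refine lintegral_congr fun x => ?_
      by_cases hx : x ∈ {x | ‖g x‖ ≤ lam μ}
      · rw [hg1, indicator_of_mem hx, indicator_of_mem hx]
      · rw [hg1, indicator_of_notMem hx, indicator_of_notMem hx]; simp
    rw [lintegral_mul_const' _ _ ENNReal.ofReal_ne_top, lintegral_mul_const' _ _ ENNReal.ofReal_ne_top,
      ← hN]
    calc _ = 4 * ENNReal.ofReal (μ ^ (r - 3)) * (ENNReal.ofReal (μ / 2) ^ 2 *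
            ∫⁻ s in I, m s μ ^ (1 / 3 : ℝ)) := by
          rw [← mul_assoc, mul_comm]
          congr 1
          rw [← ENNReal.ofReal_pow (by positivity), show (4 : ℝ≥0∞) = ENNReal.ofReal 4 by simp,
            ← ENNReal.ofReal_mul (by norm_num), ← ENNReal.ofReal_mul (by positivity)]
          congr 1
          rw [show r - 1 = (r - 3) + (2 : ℕ) by push_cast; ring, Real.rpow_add_natCast hμ.ne']
          ring
      _ ≤ 4 * ENNReal.ofReal (μ ^ (r - 3)) * (216 * ∫⁻ x, ‖g1 x‖ₑ ^ 2) := by gcongr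
      _ = _ := by ring
  refine (setLIntegral_mono' measurableSet_Ioi s2).trans ?_
  have hset : MeasurableSet {p : ℝ × V3 | ‖g p.2‖ ≤ lam p.1} :=
    measurableSet_le (hg.comp measurable_snd).norm (hlm.comp measurable_fst)
  have mm3 : Measurable (fun p : ℝ × V3 => ({x | ‖g x‖ ≤ lam p.1}.indicator
      (fun x => ‖g x‖ₑ ^ 2) p.2) * ENNReal.ofReal (p.1 ^ (r - 3))) := by
    refine Measurable.mul ?_ (by fun_prop)
    exact (((hg.comp measurable_snd).enorm.pow_const 2).indicator hset)
  rw [lintegral_const_mul _ mm3.lintegral_prod_right', lintegral_lintegral_swap mm3.aemeasurable]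
  have s3 : ∀ x, ∫⁻ μ in Ioi 0, ({x | ‖g x‖ ≤ lam μ}.indicator (fun x => ‖g x‖ₑ ^ 2) x) *
      ENNReal.ofReal (μ ^ (r - 3)) ≤ ENNReal.ofReal ((2 * Dt t * X) ^ (r - 2) / (r - 2)) *
        ENNReal.ofReal (‖g x‖ ^ (r / (r - 1))) := by
    intro x
    rcases (norm_nonneg (g x)).eq_or_lt with h0 | h0
    · have h0' : g x = 0 := norm_eq_zero.1 h0.symm
      have : ∀ μ, ({x | ‖g x‖ ≤ lam μ}.indicator (fun x => ‖g x‖ₑ ^ 2) x) *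
        ENNReal.ofReal (μ ^ (r - 3)) = 0 := by
        intro μ; simp [indicator, h0']
      simp [this]
    set b := 2 * Dt t * X * ‖g x‖ ^ (-(1 / (r - 1))) with hb
    have hb0 : 0 < b := by positivity
    calc _ ≤ ∫⁻ μ in Ioi 0, (Ioc 0 b).indicator (fun μ => ‖g x‖ₑ ^ 2 *
            ENNReal.ofReal (μ ^ (r - 3))) μ := by
          refine setLIntegral_mono' measurableSet_Ioi fun μ hμ => ?_
          have hμ : 0 < μ := hμ
          by_cases hx : ‖g x‖ ≤ lam μ
          · have hμb : μ ≤ b := by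
              have h1 := Real.rpow_le_rpow_of_nonpos h0 hx (show -(1 / (r - 1)) ≤ 0 by
                have : 0 < 1 / (r - 1) := by positivity
                linarith)
              have e3 : lam μ ^ (-(1 / (r - 1))) = μ / (2 * Dt t * X) := by
                simp only [hl]
                rw [← Real.rpow_mul (by positivity)]
                rw [show (r - 1) * -(1 / (r - 1)) = -1 by field_simp, Real.rpow_neg_one, inv_div]
              rw [e3, div_le_iff₀ (by positivity)] at h1
              rw [hb]; linarith
            rw [indicator_of_mem (show x ∈ {x | ‖g x‖ ≤ lam μ} from hx),
              indicator_of_mem (show μ ∈ Ioc 0 b from ⟨hμ, hμb⟩)]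
          · rw [indicator_of_notMem (show x ∉ {x | ‖g x‖ ≤ lam μ} from hx)]; simp
      _ ≤ ∫⁻ μ in Ioc 0 b, ‖g x‖ₑ ^ 2 * ENNReal.ofReal (μ ^ (r - 3)) := by
          rw [← lintegral_indicator measurableSet_Ioc]
          exact setLIntegral_le_lintegral _ _
      _ = _ := by
          rw [lintegral_const_mul _ (by fun_prop), lintegral_rpow_Ioc (by linarith) hb0.le,
            ← ofReal_norm, ← ENNReal.ofReal_pow (norm_nonneg _), ← ENNReal.ofReal_mul (by positivity),
            ← ENNReal.ofReal_mul (div_nonneg (by positivity) (by linarith))]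
          congr 1
          rw [show r - 3 + 1 = r - 2 by ring, hb, Real.mul_rpow (by positivity) (by positivity),
            ← Real.rpow_mul h0.le, ← Real.rpow_natCast ‖g x‖ 2]
          have : ‖g x‖ ^ (r / (r - 1)) = ‖g x‖ ^ ((2 : ℕ) : ℝ) * ‖g x‖ ^ (-(1 / (r - 1)) * (r - 2)) := by
            rw [← Real.rpow_add h0]
            congr 1; push_cast; field_simp; ring
          rw [this]; ring
  calc _ ≤ 864 * ∫⁻ x, ENNReal.ofReal ((2 * Dt t * X) ^ (r - 2) / (r - 2)) *
        ENNReal.ofReal (‖g x‖ ^ (r / (r - 1))) := by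
        gcongr with x
        exact s3 x
    _ ≤ 864 * (ENNReal.ofReal ((2 * Dt t * X) ^ (r - 2) / (r - 2)) * ENNReal.ofReal X) := by
        rw [lintegral_const_mul' _ _ ENNReal.ofReal_ne_top]
        gcongr
    _ = _ := by
        have hh : 0 ≤ (2 * Dt t * X) ^ (r - 2) / (r - 2) := div_nonneg (by positivity) (by linarith)
        rw [show (864 : ℝ≥0∞) = ENNReal.ofReal 864 by simp, ← ENNReal.ofReal_mul hh,
          ← ENNReal.ofReal_mul (by norm_num)]
        congr 1; ring

def C2 (r : ℝ) : ℝ :=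
  ((3 * r ^ 3) ^ (1 / 3 : ℝ) * (864 * 2 ^ (r - 2) / (r - 2)) *
    ((2 * π) ^ (-(3 / 2 : ℝ))) ^ (r - 2)) ^ (1 / r)

def C3 (r : ℝ) : ℝ := (2 * (r - 1) / (4 - r)) ^ ((r - 1) / r)

lemma C2_pos {r : ℝ} (hr : 2 < r) : 0 < C2 r := by
  have : 0 < r - 2 := by linarith
  have : 0 < r := by linarith
  unfold C2; positivity

lemma C3_pos {r : ℝ} (hr : 2 < r) (hr4 : r < 4) : 0 < C3 r := by
  have : 0 < r - 1 := by linarith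
  have : 0 < 4 - r := by linarith
  unfold C3; positivity

lemma real_id1 {r t X : ℝ} (hr : 2 < r) (ht : 0 < t) (hX : 0 < X) :
    ((3 * r ^ 3) ^ (1 / 3 : ℝ) * (864 * (2 * Dt t * X) ^ (r - 2) / (r - 2) * X)) ^ (1 / r) =
      C2 r * t ^ (-(3 * (1 / 2 - 1 / r))) * X ^ ((r - 1) / r) := by
  have h2 : 0 < r - 2 := by linarith
  have h0 : 0 < r := by linarith
  have e1 : (2 * Dt t * X) ^ (r - 2) =
      2 ^ (r - 2) * (((2 * π) ^ (-(3 / 2 : ℝ))) ^ (r - 2) * t ^ (-(3 / 2 : ℝ) * (r - 2))) *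
        X ^ (r - 2) := by
    unfold Dt
    rw [Real.mul_rpow (by positivity) hX.le, Real.mul_rpow (by norm_num) (by positivity),
      Real.mul_rpow (by positivity) ht.le, Real.mul_rpow (by positivity) (by positivity),
      ← Real.rpow_mul ht.le]
  have e2 : (3 * r ^ 3) ^ (1 / 3 : ℝ) * (864 * (2 * Dt t * X) ^ (r - 2) / (r - 2) * X) =
      ((3 * r ^ 3) ^ (1 / 3 : ℝ) * (864 * 2 ^ (r - 2) / (r - 2)) *
    ((2 * π) ^ (-(3 / 2 : ℝ))) ^ (r - 2)) * t ^ (-(3 / 2 : ℝ) * (r - 2)) * X ^ (r - 1) := by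
    rw [e1, show r - 1 = (r - 2) + 1 by ring, Real.rpow_add_one hX.ne']
    ring
  rw [e2, Real.mul_rpow (by positivity) (by positivity), Real.mul_rpow (by positivity) (by positivity),
    ← Real.rpow_mul ht.le, ← Real.rpow_mul hX.le]
  unfold C2
  congr 2
  · congr 1; field_simp
  · ring

lemma real_id2 {r A : ℝ} (hr : 2 < r) (hr4 : r < 4) (hA : 0 < A) :
    (A ^ (-((r + 2) / (2 * r)) * (r / (r - 1)) + 1) /
      (-(-((r + 2) / (2 * r)) * (r / (r - 1)) + 1))) ^ (1 / (r / (r - 1))) =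
      C3 r * A ^ (-((4 - r) / (2 * r))) := by
  have h1 : 0 < r - 1 := by linarith
  have h4 : 0 < 4 - r := by linarith
  have h0 : 0 < r := by linarith
  have e : -((r + 2) / (2 * r)) * (r / (r - 1)) + 1 = -((4 - r) / (2 * (r - 1))) := by
    field_simp; ring
  rw [e, neg_neg, one_div_div, div_eq_mul_inv, inv_div, Real.mul_rpow (by positivity) (by positivity),
    ← Real.rpow_mul hA.le, mul_comm]
  unfold C3
  congr 2
  field_simp

lemma enorm_rpow_eq (z : ℂ) {p : ℝ} (hp : 0 ≤ p) : ‖z‖ₑ ^ p = ENNReal.ofReal (‖z‖ ^ p) := by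
  rw [← ofReal_norm, ENNReal.ofReal_rpow_of_nonneg (norm_nonneg _) hp]

lemma T_meas (t : ℝ) (I : Set ℝ) {F : ℝ → V3 → ℂ} (hF : Measurable (Function.uncurry F)) :
    Measurable (fun y => ∫ s in I, Sf (t - s) (F s) y) := by
  have : StronglyMeasurable (fun p : V3 × ℝ => Sf (t - p.2) (F p.2) p.1) :=
    ((SfT_meas t hF).comp measurable_swap).stronglyMeasurable
  exact this.integral_prod_right'.measurable

lemma holder_st {t r A R X : ℝ} {K : ℝ≥0∞} (ht : 0 < t) (hr : 2 < r) (hr4 : r < 4) (hA : 0 < A)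
    (hR : 0 < R) (hX : 0 < X) {I : Set ℝ} (hI : MeasurableSet I) (hIt : I ⊆ Icc A (t / 2))
    {F : ℝ → V3 → ℂ} (hF : Measurable (Function.uncurry F))
    (hK : ∀ᵐ s ∂(volume.restrict I), (∫⁻ x, ‖F s x‖ₑ ^ (3 * r / (3 * r - 1))) ^
      (1 / (3 * r / (3 * r - 1))) ≤ K * ENNReal.ofReal (s ^ (-((r + 2) / (2 * r)))))
    {g : V3 → ℂ} (hg : Measurable g) (hgi : Integrable g) (hgs : ∀ x, R < ‖x‖ → g x = 0)
    (hgX : ∫⁻ x, ENNReal.ofReal (‖g x‖ ^ (r / (r - 1))) ≤ ENNReal.ofReal X) :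
    ∫⁻ p, ‖F p.1 p.2‖ₑ * ‖Sf (t - p.1) g p.2‖ₑ ∂((volume.restrict I).prod volume) ≤
      K * ENNReal.ofReal (C3 r * A ^ (-((4 - r) / (2 * r)))) *
        ENNReal.ofReal (C2 r * t ^ (-(3 * (1 / 2 - 1 / r))) * X ^ ((r - 1) / r)) := by
  have h1 : 0 < r - 1 := by linarith
  have h4 : 0 < 4 - r := by linarith
  have h0 : 0 < r := by linarith
  have h31 : 0 < 3 * r - 1 := by linarith
  have hIt0 : I ⊆ Icc 0 (t / 2) := hIt.trans (Icc_subset_Icc_left hA.le)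
  have hwm : Measurable (fun p : ℝ × V3 => Sf (t - p.1) g p.2) :=
    SfT_meas t (φ := fun _ => g) (hg.comp measurable_snd)
  have hfm : Measurable (fun p : ℝ × V3 => ‖F p.1 p.2‖ₑ * ‖Sf (t - p.1) g p.2‖ₑ) :=
    hF.enorm.mul hwm.enorm
  have hU : (⋃ n : ℕ, (univ : Set ℝ) ×ˢ Metric.closedBall (0 : V3) n) = univ := by
    rw [← prod_iUnion, Metric.iUnion_closedBall_nat, univ_prod_univ]
  have hdir : Directed (· ⊆ ·) (fun n : ℕ => (univ : Set ℝ) ×ˢ Metric.closedBall (0 : V3) n) := by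
    refine Monotone.directed_le (f := fun n : ℕ => (univ : Set ℝ) ×ˢ Metric.closedBall (0 : V3) n) ?_
    intro a b hab
    exact prod_mono le_rfl (Metric.closedBall_subset_closedBall (by exact_mod_cast hab))
  rw [← setLIntegral_univ, ← hU, setLIntegral_iUnion_of_directed _ hdir]
  refine iSup_le fun n => ?_
  rw [← Measure.prod_restrict, Measure.restrict_univ, lintegral_prod _ hfm.aemeasurable]
  set B := Metric.closedBall (0 : V3) n with hB
  set W : ℝ → ℝ≥0∞ := fun s => (∫⁻ x in B, ‖Sf (t - s) g x‖ₑ ^ (3 * r)) ^ (1 / (3 * r)) with hW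
  have hWm : Measurable W := by
    have : Measurable (fun p : ℝ × V3 => ‖Sf (t - p.1) g p.2‖ₑ ^ (3 * r)) :=
      hwm.enorm.pow_const _
    exact this.lintegral_prod_right'.pow_const _
  have hold1 : (3 * r / (3 * r - 1)).HolderConjugate (3 * r) := by
    rw [Real.holderConjugate_iff]
    constructor
    · rw [lt_div_iff₀ h31]; linarith
    · field_simp; ring
  have hold2 : (r / (r - 1)).HolderConjugate r := by
    rw [Real.holderConjugate_iff]
    constructor
    · rw [lt_div_iff₀ h1]; linarith
    · field_simp; ring
  have step1 : ∫⁻ s in I, ∫⁻ x in B, ‖F s x‖ₑ * ‖Sf (t - s) g x‖ₑ ≤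
      ∫⁻ s in I, (K * ENNReal.ofReal (s ^ (-((r + 2) / (2 * r))))) * W s := by
    refine lintegral_mono_ae ?_
    filter_upwards [hK] with s hs
    refine (ENNReal.lintegral_mul_le_Lp_mul_Lq _ hold1
      (hF.of_uncurry_left).enorm.aemeasurable (Sf_meas _ hg).enorm.aemeasurable).trans ?_
    simp only [hW]
    gcongr
    refine le_trans (ENNReal.rpow_le_rpow (setLIntegral_le_lintegral _ _) ?_) hs
    positivity
  refine step1.trans ?_
  have hsm : Measurable (fun s : ℝ => ENNReal.ofReal (s ^ (-((r + 2) / (2 * r))))) := by fun_prop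
  simp only [mul_assoc]
  rw [lintegral_const_mul _ (by exact hsm.mul hWm)]
  gcongr
  refine (ENNReal.lintegral_mul_le_Lp_mul_Lq _ hold2 hsm.aemeasurable hWm.aemeasurable).trans ?_
  gcongr ?_ * ?_
  · rw [← real_id2 hr hr4 hA]
    have hq : -((r + 2) / (2 * r)) * (r / (r - 1)) < -1 := by
      have e : -((r + 2) / (2 * r)) * (r / (r - 1)) = -1 - ((4 - r) / (2 * (r - 1))) := by
        field_simp; ring
      have : 0 < (4 - r) / (2 * (r - 1)) := by positivity
      linarith
    rw [← ENNReal.ofReal_rpow_of_nonneg (div_nonneg (by positivity) (by linarith)) (by positivity)]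
    rw [← lintegral_rpow_Ioi hq hA]
    refine ENNReal.rpow_le_rpow ?_ (by positivity)
    calc _ ≤ ∫⁻ s in Ici A, ENNReal.ofReal (s ^ (-((r + 2) / (2 * r)))) ^ (r / (r - 1)) :=
          lintegral_mono_set (fun s hs => (hIt hs).1)
      _ = ∫⁻ s in Ioi A, ENNReal.ofReal (s ^ (-((r + 2) / (2 * r)))) ^ (r / (r - 1)) :=
          (setLIntegral_congr Ioi_ae_eq_Ici).symm
      _ = _ := by
          refine setLIntegral_congr_fun measurableSet_Ioi fun s hs => ?_
          have hs : 0 < s := hA.trans hs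
          rw [ENNReal.ofReal_rpow_of_nonneg (by positivity) (by positivity), ← Real.rpow_mul hs.le]
  · rw [← mul_assoc, ← real_id1 hr ht hX]
    have hpos : 0 ≤ 864 * (2 * Dt t * X) ^ (r - 2) / (r - 2) * X := by
      have := Dt_pos ht
      have : 0 < r - 2 := by linarith
      positivity
    rw [← ENNReal.ofReal_rpow_of_nonneg (mul_nonneg (by positivity) hpos) (by positivity)]
    refine ENNReal.rpow_le_rpow ?_ (by positivity)
    rw [ENNReal.ofReal_mul (by positivity),
      ← ENNReal.ofReal_rpow_of_nonneg (by positivity) (by norm_num)]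
    refine le_trans (le_of_eq ?_) (realInterp (R' := n) ht hX hr hR hI hIt0 hg hgi hgs hgX)
    refine lintegral_congr fun s => ?_
    simp only [hW]
    rw [← ENNReal.rpow_mul]
    congr 1
    · simp only [enorm_rpow_eq _ (show 0 ≤ 3 * r by positivity)]
      rfl
    · field_simp

open ComplexConjugate in
lemma niceF {t r A : ℝ} {K : ℝ≥0∞} (ht : 0 < t) (hr : 2 < r) (hr4 : r < 4) (hA : 0 < A)
    {I : Set ℝ} (hI : MeasurableSet I) (hIt : I ⊆ Icc A (t / 2))
    {F : ℝ → V3 → ℂ} (hF : Measurable (Function.uncurry F))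
    (hFi : Integrable (Function.uncurry F) ((volume.restrict I).prod volume))
    (hK : ∀ᵐ s ∂(volume.restrict I), (∫⁻ x, ‖F s x‖ₑ ^ (3 * r / (3 * r - 1))) ^
      (1 / (3 * r / (3 * r - 1))) ≤ K * ENNReal.ofReal (s ^ (-((r + 2) / (2 * r))))) :
    ∫⁻ x, ‖∫ s in I, Sf (t - s) (F s) x‖ₑ ^ r ≤
      (ENNReal.ofReal (C3 r * C2 r * t ^ (-(3 * (1 / 2 - 1 / r))) * A ^ (-((4 - r) / (2 * r)))) * K)
        ^ r := by
  have h1 : 0 < r - 1 := by linarith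
  have h0 : 0 < r := by linarith
  have hIt2 : ∀ s ∈ I, s ≤ t / 2 := fun s hs => (hIt hs).2
  set T : V3 → ℂ := fun x => ∫ s in I, Sf (t - s) (F s) x with hT
  have hTm : Measurable T := T_meas t I hF
  have hFs : Integrable (fun s => ∫ x, ‖F s x‖) (volume.restrict I) := hFi.integral_norm_prod_left
  obtain ⟨M, hM0, hM⟩ : ∃ M : ℝ, 0 ≤ M ∧ ∀ x, ‖T x‖ ≤ M := by
    have hb : ∀ x, ‖T x‖ ≤ ∫ s in I, Dt t * ∫ x, ‖F s x‖ := by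
      intro x
      refine norm_integral_le_of_norm_le (hFs.const_mul _) ?_
      filter_upwards [ae_restrict_mem hI, hFi.prod_right_ae] with s hs hi
      exact Sf_bound ht (hIt2 s hs) hi x
    exact ⟨_, (norm_nonneg _).trans (hb 0), hb⟩
  have hU : (⋃ n : ℕ, Metric.closedBall (0 : V3) n) = univ := Metric.iUnion_closedBall_nat _
  have hdir : Directed (· ⊆ ·) (fun n : ℕ => Metric.closedBall (0 : V3) n) := by
    refine Monotone.directed_le (f := fun n : ℕ => Metric.closedBall (0 : V3) n) ?_
    intro a b hab
    exact Metric.closedBall_subset_closedBall (by exact_mod_cast hab)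
  rw [← setLIntegral_univ, ← hU, setLIntegral_iUnion_of_directed _ hdir]
  refine iSup_le fun n => ?_
  set B := Metric.closedBall (0 : V3) n with hB
  have hBm : MeasurableSet B := measurableSet_closedBall
  have hBf : volume B < ∞ := measure_closedBall_lt_top
  have hfin : ∫⁻ x in B, ‖T x‖ₑ ^ r < ∞ := by
    refine (lintegral_mono (g := fun _ => ENNReal.ofReal M ^ r) fun x => ?_).trans_lt ?_
    · refine ENNReal.rpow_le_rpow ?_ h0.le
      rw [← ofReal_norm]; exact ENNReal.ofReal_le_ofReal (hM x)
    · rw [setLIntegral_const]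
      exact ENNReal.mul_lt_top (ENNReal.rpow_lt_top_of_nonneg h0.le ENNReal.ofReal_ne_top) hBf
  set X := (∫⁻ x in B, ‖T x‖ₑ ^ r).toReal with hXd
  have hXe : ∫⁻ x in B, ‖T x‖ₑ ^ r = ENNReal.ofReal X := (ENNReal.ofReal_toReal hfin.ne).symm
  rw [hXe]
  have hX0 : 0 ≤ X := ENNReal.toReal_nonneg
  rcases hX0.eq_or_lt with hX | hX
  · rw [← hX]; simp
  set g : V3 → ℂ := B.indicator (fun x => ((‖T x‖ ^ (r - 2) : ℝ) : ℂ) * conj (T x)) with hgd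
  have hg : Measurable g := by
    refine Measurable.indicator ?_ hBm
    exact (Complex.measurable_ofReal.comp (hTm.norm.pow_const _)).mul
      (Complex.continuous_conj.measurable.comp hTm)
  have hgn : ∀ x, ‖g x‖ = B.indicator (fun x => ‖T x‖ ^ (r - 1)) x := by
    intro x
    by_cases hx : x ∈ B
    · rw [hgd, indicator_of_mem hx, indicator_of_mem hx, norm_mul, RCLike.norm_conj,
        Complex.norm_real, Real.norm_eq_abs, abs_of_nonneg (by positivity)]
      rw [show r - 1 = (r - 2) + 1 by ring,
        Real.rpow_add_one' (norm_nonneg _) (by linarith)]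
    · rw [hgd, indicator_of_notMem hx, indicator_of_notMem hx, norm_zero]
  have hgi : Integrable g := by
    have : IntegrableOn (fun _ => M ^ (r - 1)) B := integrableOn_const hBf.ne
    refine (this.integrable_indicator hBm).mono' hg.aestronglyMeasurable
      (Filter.Eventually.of_forall fun x => ?_)
    rw [hgn]
    refine indicator_le_indicator ?_
    exact Real.rpow_le_rpow (norm_nonneg _) (hM x) h1.le
  have hgs : ∀ x, (n : ℝ) + 1 < ‖x‖ → g x = 0 := by
    intro x hx
    rw [hgd, indicator_of_notMem]
    simp only [hB, Metric.mem_closedBall, dist_zero_right, not_le]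
    linarith
  have hgX : ∫⁻ x, ENNReal.ofReal (‖g x‖ ^ (r / (r - 1))) ≤ ENNReal.ofReal X := by
    rw [← hXe, ← lintegral_indicator hBm]
    refine lintegral_mono fun x => ?_
    rw [hgn]
    by_cases hx : x ∈ B
    · rw [indicator_of_mem hx, indicator_of_mem hx, enorm_rpow_eq _ h0.le,
        ← Real.rpow_mul (norm_nonneg _)]
      apply ENNReal.ofReal_le_ofReal
      rw [show (r - 1) * (r / (r - 1)) = r by field_simp]
    · rw [indicator_of_notMem hx, indicator_of_notMem hx, Real.zero_rpow (by positivity)]; simp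
  have hdual := dualF ht hI hIt2 hF hFi hg hgi
  have hst := holder_st ht hr hr4 hA (by positivity : (0 : ℝ) < n + 1) hX hI hIt hF hK hg hgi hgs hgX
  have hXle : ENNReal.ofReal X ≤ ‖∫ y, g y * T y‖ₑ := by
    have e : ∀ y, g y * T y = ((B.indicator (fun y => ‖T y‖ ^ r) y : ℝ) : ℂ) := by
      intro y
      by_cases hy : y ∈ B
      · rw [hgd, indicator_of_mem hy, indicator_of_mem hy, mul_assoc, mul_comm (conj (T y)),
          Complex.mul_conj, Complex.normSq_eq_norm_sq, ← Complex.ofReal_mul]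
        congr 1
        rw [← Real.rpow_natCast, ← Real.rpow_add' (norm_nonneg _) (by push_cast; linarith)]
        congr 1; push_cast; ring
      · rw [hgd, indicator_of_notMem hy, indicator_of_notMem hy]; simp
    simp only [e]
    rw [integral_complex_ofReal, ← ofReal_norm, Complex.norm_real, Real.norm_eq_abs]
    apply ENNReal.ofReal_le_ofReal
    refine le_trans (le_of_eq ?_) (le_abs_self _)
    rw [integral_indicator hBm, hXd, integral_eq_lintegral_of_nonneg_ae
      (Filter.Eventually.of_forall fun x => by positivity) (by exact (hTm.norm.pow_const r).aestronglyMeasurable)]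
    simp only [enorm_rpow_eq _ h0.le]
  rw [← hdual] at hXle
  have h5 := hXle.trans ((enorm_integral_le_lintegral_enorm _).trans
    ((le_of_eq (by simp only [enorm_mul])).trans hst))
  set Q := ENNReal.ofReal (C3 r * C2 r * t ^ (-(3 * (1 / 2 - 1 / r))) *
    A ^ (-((4 - r) / (2 * r)))) * K with hQ
  have c2 := C2_pos hr
  have c3 := C3_pos hr hr4
  have h6 : ENNReal.ofReal (X ^ (1 / r)) * ENNReal.ofReal (X ^ ((r - 1) / r)) ≤
      Q * ENNReal.ofReal (X ^ ((r - 1) / r)) := by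
    refine le_trans (le_of_eq ?_) (h5.trans (le_of_eq ?_))
    · rw [← ENNReal.ofReal_mul (by positivity), ← Real.rpow_add hX]
      rw [show 1 / r + (r - 1) / r = 1 by field_simp; ring, Real.rpow_one]
    · rw [hQ, mul_comm _ K, mul_assoc K, mul_assoc K, ← ENNReal.ofReal_mul (by positivity),
        ← ENNReal.ofReal_mul (by positivity)]
      congr 2; ring
  have h7 : ENNReal.ofReal (X ^ (1 / r)) ≤ Q :=
    (ENNReal.mul_le_mul_iff_left (by rw [ne_eq, ENNReal.ofReal_eq_zero, not_le]; positivity)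
      ENNReal.ofReal_ne_top).1 h6
  refine le_trans (le_of_eq ?_) (ENNReal.rpow_le_rpow h7 h0.le)
  rw [ENNReal.ofReal_rpow_of_nonneg (by positivity) h0.le, ← Real.rpow_mul hX.le]
  rw [show 1 / r * r = 1 by field_simp, Real.rpow_one]

lemma Sf_zero_of_not {t s : ℝ} (ht : 0 < t) (hs : s ≤ t / 2) {f : V3 → ℂ} (hf : Measurable f)
    (hni : ∫⁻ y, ‖f y‖ₑ = ∞) (x : V3) : Sf (t - s) f x = 0 := by
  unfold Sf
  apply integral_undef
  intro hI
  have h2 := hI.2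
  rw [hasFiniteIntegral_iff_enorm] at h2
  have hp : 0 < t - s := by linarith
  simp only [enorm_mul] at h2
  have e : ∀ y, ‖Ker (t - s) x y‖ₑ = ENNReal.ofReal ((4 * π * (t - s)) ^ (-(3 / 2 : ℝ))) := by
    intro y
    rw [← ofReal_norm, norm_Ker hp]
  simp only [e] at h2
  rw [lintegral_const_mul _ hf.enorm, hni, ENNReal.mul_top] at h2
  · exact lt_irrefl _ h2
  · rw [ne_eq, ENNReal.ofReal_eq_zero, not_le]; positivity

lemma slice_meas {α : Type*} [MeasurableSpace α] (Φ : ℝ → ℝ → α → ℂ) (t : ℝ) (x : α)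
    (h : Measurable (fun p : ℝ × α => Φ (t - p.1) p.1 p.2)) :
    Measurable (fun s => Φ (t - s) s x) := by
  have h2 : Measurable (fun s : ℝ => (s, x)) := measurable_id.prodMk measurable_const
  exact h.comp h2

lemma Sfs_meas (t : ℝ) (x : V3) {H : ℝ → V3 → ℂ} (hH : Measurable (Function.uncurry H)) :
    Measurable (fun s => Sf (t - s) (H s) x) :=
  slice_meas (fun τ s x => Sf τ (H s) x) t x (SfT_meas t hH)

lemma Sf_zero (τ : ℝ) (x : V3) : Sf τ (0 : V3 → ℂ) x = 0 := by simp [Sf]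

lemma genF_lim {t : ℝ} (ht : 0 < t) {I : Set ℝ} (hI : MeasurableSet I)
    (hIt2 : ∀ s ∈ I, s ≤ t / 2) {F : ℝ → V3 → ℂ} (hF : Measurable (Function.uncurry F))
    (L : ℝ → ℝ≥0∞) (hL : ∀ s, L s = ∫⁻ x, ‖F s x‖ₑ) (G : ℕ → ℝ → V3 → ℂ)
    (hGm : ∀ n, Measurable (Function.uncurry (G n)))
    (hG1 : ∀ n : ℕ, ∀ s, L s ≤ n → G n s = F s)
    (hG2 : ∀ n : ℕ, ∀ s, ¬ L s ≤ n → G n s = 0) (x : V3)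
    (hint : IntegrableOn (fun s => Sf (t - s) (F s) x) I) :
    Filter.Tendsto (fun n => ∫ s in I, Sf (t - s) (G n s) x) Filter.atTop
          (nhds (∫ s in I, Sf (t - s) (F s) x)) := by
  have h1 : ∀ n, AEStronglyMeasurable (fun s => Sf (t - s) (G n s) x) (volume.restrict I) :=
    fun n => (Sfs_meas t x (hGm n)).aestronglyMeasurable
  have h2 : Integrable (fun s => ‖Sf (t - s) (F s) x‖) (volume.restrict I) := hint.norm
  have h3 : ∀ n, ∀ᵐ s ∂(volume.restrict I), ‖Sf (t - s) (G n s) x‖ ≤ ‖Sf (t - s) (F s) x‖ := by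
    intro n
    refine Filter.Eventually.of_forall fun s => ?_
    by_cases h : L s ≤ n
    · rw [hG1 n s h]
    · rw [hG2 n s h, Sf_zero, norm_zero]; exact norm_nonneg _
  have h4 : ∀ᵐ s ∂(volume.restrict I), Filter.Tendsto (fun n => Sf (t - s) (G n s) x)
      Filter.atTop (nhds (Sf (t - s) (F s) x)) := by
    filter_upwards [ae_restrict_mem hI] with s hs
    by_cases h : L s = ∞
    · have hFs : Measurable (F s) := hF.of_uncurry_left
      rw [Sf_zero_of_not ht (hIt2 s hs) hFs ((hL s).symm.trans h)]
      have : ∀ n : ℕ, Sf (t - s) (G n s) x = 0 := by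
        intro n
        rw [hG2 n s (by rw [h]; simp), Sf_zero]
      simp only [this]
      exact tendsto_const_nhds
    · obtain ⟨N, hN⟩ := ENNReal.exists_nat_gt h
      refine tendsto_const_nhds.congr' ?_
      filter_upwards [Filter.eventually_ge_atTop N] with n hn
      rw [hG1 n s (hN.le.trans (by exact_mod_cast hn))]
  exact tendsto_integral_of_dominated_convergence (F := fun n s => Sf (t - s) (G n s) x)
    (f := fun s => Sf (t - s) (F s) x) (fun s => ‖Sf (t - s) (F s) x‖) h1 h2 h3 h4

lemma genF {t r A : ℝ} {K : ℝ≥0∞} (ht : 0 < t) (hr : 2 < r) (hr4 : r < 4) (hA : 0 < A)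
    {I : Set ℝ} (hI : MeasurableSet I) (hIt : I ⊆ Icc A (t / 2))
    {F : ℝ → V3 → ℂ} (hF : Measurable (Function.uncurry F))
    (hK : ∀ᵐ s ∂(volume.restrict I), (∫⁻ x, ‖F s x‖ₑ ^ (3 * r / (3 * r - 1))) ^
      (1 / (3 * r / (3 * r - 1))) ≤ K * ENNReal.ofReal (s ^ (-((r + 2) / (2 * r))))) :
    ∫⁻ x, ‖∫ s in I, Sf (t - s) (F s) x‖ₑ ^ r ≤
      (ENNReal.ofReal (C3 r * C2 r * t ^ (-(3 * (1 / 2 - 1 / r))) * A ^ (-((4 - r) / (2 * r)))) * K)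
        ^ r := by
  have h0 : 0 < r := by linarith
  have h31 : 0 < 3 * r - 1 := by linarith
  have hIt2 : ∀ s ∈ I, s ≤ t / 2 := fun s hs => (hIt hs).2
  have hIf : volume I < ∞ := (measure_mono hIt).trans_lt (by simp)
  set L : ℝ → ℝ≥0∞ := fun s => ∫⁻ x, ‖F s x‖ₑ with hL
  have hLm : Measurable L := hF.enorm.lintegral_prod_right'
  set G : ℕ → ℝ → V3 → ℂ := fun n s x =>
    {p : ℝ × V3 | L p.1 ≤ n}.indicator (Function.uncurry F) (s, x) with hG
  have hset : ∀ n : ℕ, MeasurableSet {p : ℝ × V3 | L p.1 ≤ n} := fun n =>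
    measurableSet_le (hLm.comp measurable_fst) measurable_const
  have hGm : ∀ n, Measurable (Function.uncurry (G n)) := fun n => hF.indicator (hset n)
  have hG1 : ∀ n : ℕ, ∀ s, L s ≤ n → G n s = F s := by
    intro n s hs
    ext x
    simp only [hG]
    rw [indicator_of_mem (show (s, x) ∈ {p : ℝ × V3 | L p.1 ≤ n} from hs)]; rfl
  have hG2 : ∀ n : ℕ, ∀ s, ¬ L s ≤ n → G n s = 0 := by
    intro n s hs
    ext x
    simp only [hG]
    rw [indicator_of_notMem (show (s, x) ∉ {p : ℝ × V3 | L p.1 ≤ n} from hs)]; rfl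
  have hGi : ∀ n, Integrable (Function.uncurry (G n)) ((volume.restrict I).prod volume) := by
    intro n
    refine ⟨(hGm n).aestronglyMeasurable, ?_⟩
    rw [hasFiniteIntegral_iff_enorm, lintegral_prod _ (hGm n).enorm.aemeasurable]
    refine (lintegral_mono (g := fun _ => (n : ℝ≥0∞)) fun s => ?_).trans_lt ?_
    · by_cases hs : L s ≤ n
      · simp only [Function.uncurry, hG1 n s hs]; exact hs
      · simp only [Function.uncurry, hG2 n s hs]; simp
    · rw [setLIntegral_const]; exact ENNReal.mul_lt_top (by simp) hIf
  have hGK : ∀ n, ∀ᵐ s ∂(volume.restrict I), (∫⁻ x, ‖G n s x‖ₑ ^ (3 * r / (3 * r - 1))) ^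
      (1 / (3 * r / (3 * r - 1))) ≤ K * ENNReal.ofReal (s ^ (-((r + 2) / (2 * r)))) := by
    intro n
    filter_upwards [hK] with s hs
    by_cases h : L s ≤ n
    · rw [hG1 n s h]; exact hs
    · rw [hG2 n s h]
      have hq : 0 < 3 * r / (3 * r - 1) := by positivity
      have hq' : 0 < 1 / (3 * r / (3 * r - 1)) := by positivity
      simp only [Pi.zero_apply, enorm_zero, ENNReal.zero_rpow_of_pos hq, lintegral_zero,
        ENNReal.zero_rpow_of_pos hq', zero_le]
  have hGb := fun n => niceF ht hr hr4 hA hI hIt (hGm n) (hGi n) (hGK n)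
  have pt : ∀ x, ‖∫ s in I, Sf (t - s) (F s) x‖ₑ ^ r ≤
      Filter.liminf (fun n => ‖∫ s in I, Sf (t - s) (G n s) x‖ₑ ^ r) Filter.atTop := by
    intro x
    by_cases hint : IntegrableOn (fun s => Sf (t - s) (F s) x) I
    · have ht1 := genF_lim ht hI hIt2 hF L (fun s => rfl) G hGm hG1 hG2 x hint
      have ht2 := (ENNReal.continuous_rpow_const (y := r)).continuousAt.tendsto.comp
        (ht1.enorm)
      exact ht2.liminf_eq.ge
    · rw [integral_undef hint, enorm_zero, ENNReal.zero_rpow_of_pos h0]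
      exact zero_le
  refine (lintegral_mono pt).trans ((lintegral_liminf_le fun n =>
    (T_meas t I (hGm n)).enorm.pow_const r).trans ?_)
  refine (Filter.liminf_le_liminf (Filter.Eventually.of_forall hGb)).trans ?_
  rw [Filter.liminf_const]

lemma interp_s {r : ℝ} (hr : 8 / 3 ≤ r) (hr4 : r < 4) {f : V3 → ℂ} (hf : Measurable f) :
    (∫⁻ x, ‖nonlin (4 / 3) f x‖ₑ ^ (3 * r / (3 * r - 1))) ^ (1 / (3 * r / (3 * r - 1))) ≤
      eLpNorm f 2 volume ^ (2 * (3 * r - 8) / (3 * (r - 2))) *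
        eLpNorm f (ENNReal.ofReal r) volume ^ ((r + 2) / (3 * (r - 2))) := by
  have h0 : 0 < r := by linarith
  have h2 : 0 < r - 2 := by linarith
  have h38 : 0 ≤ 3 * r - 8 := by linarith
  have h31 : 0 < 3 * r - 1 := by linarith
  set q := 3 * r / (3 * r - 1) with hq
  set a := 2 * (3 * r - 8) / (3 * (r - 2)) with ha
  set b := (r + 2) / (3 * (r - 2)) with hb
  have hq0 : 0 < q := by positivity
  have ha0 : 0 ≤ a := by positivity
  have hb0 : 0 ≤ b := by positivity
  have hab : a + b = 4 / 3 + 1 := by rw [ha, hb]; field_simp; ring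
  have hpq : a * q / 2 + b * q / r = 1 := by rw [ha, hb, hq]; field_simp; ring
  have e1 : ∀ x, ‖nonlin (4 / 3) f x‖ₑ ^ q =
      (‖f x‖ₑ ^ (2 : ℝ)) ^ (a * q / 2) * (‖f x‖ₑ ^ r) ^ (b * q / r) := by
    intro x
    unfold nonlin
    rw [enorm_mul, ← ofReal_norm ((‖f x‖ ^ (4 / 3 : ℝ) : ℝ) : ℂ), Complex.norm_real, Real.norm_eq_abs,
      abs_of_nonneg (by positivity), ← enorm_rpow_eq _ (by norm_num)]
    nth_rewrite 2 [← ENNReal.rpow_one ‖f x‖ₑ]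
    rw [← ENNReal.rpow_add_of_nonneg _ _ (by norm_num) (by norm_num), ← hab, ← ENNReal.rpow_mul,
      ← ENNReal.rpow_mul, ← ENNReal.rpow_mul, ← ENNReal.rpow_add_of_nonneg _ _ (by positivity)
        (by positivity)]
    congr 1; field_simp
  simp only [e1]
  have hH := ENNReal.lintegral_mul_norm_pow_le (μ := (volume : Measure V3))
    (f := fun x => ‖f x‖ₑ ^ (2 : ℝ)) (g := fun x => ‖f x‖ₑ ^ r)
    (hf.enorm.pow_const _).aemeasurable (hf.enorm.pow_const _).aemeasurable
    (show 0 ≤ a * q / 2 by positivity) (show 0 ≤ b * q / r by positivity) hpq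
  refine (ENNReal.rpow_le_rpow hH (by positivity)).trans (le_of_eq ?_)
  rw [eLpNorm_eq_lintegral_rpow_enorm_toReal (by norm_num) (by norm_num),
    eLpNorm_eq_lintegral_rpow_enorm_toReal (by simpa using h0) (by simp),
    ENNReal.toReal_ofReal h0.le, ENNReal.mul_rpow_of_nonneg _ _ (by positivity),
    ← ENNReal.rpow_mul, ← ENNReal.rpow_mul, ← ENNReal.rpow_mul, ← ENNReal.rpow_mul]
  congr 2
  · simp; field_simp
  · field_simp

lemma nonlin_meas {u : ℝ → V3 → ℂ} (hu : Measurable (Function.uncurry u)) :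
    Measurable (Function.uncurry (fun s => nonlin (4 / 3) (u s))) := by
  have : Function.uncurry (fun s => nonlin (4 / 3) (u s)) = fun p : ℝ × V3 =>
      ((‖Function.uncurry u p‖ ^ (4 / 3 : ℝ) : ℝ) : ℂ) * Function.uncurry u p := by
    ext p; rfl
  rw [this]
  exact (Complex.measurable_ofReal.comp (hu.norm.pow_const _)).mul hu

lemma hK_final {r A t : ℝ} (hr : 8 / 3 ≤ r) (hr4 : r < 4) (hA : 0 < A)
    {I : Set ℝ} (hI : MeasurableSet I) (hIt : I ⊆ Icc A (t / 2))
    {u : ℝ → V3 → ℂ} (hu : Measurable (Function.uncurry u)) :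
    ∀ᵐ s ∂(volume.restrict I), (∫⁻ x, ‖nonlin (4 / 3) (u s) x‖ₑ ^ (3 * r / (3 * r - 1))) ^
      (1 / (3 * r / (3 * r - 1))) ≤
        (mixedNorm volume I ∞ 2 u ^ (2 * (3 * r - 8) / (3 * (r - 2))) *
          (⨆ s ∈ I, ENNReal.ofReal (s ^ (3 * (1 / 2 - 1 / r))) *
            eLpNorm (u s) (ENNReal.ofReal r) volume) ^ ((r + 2) / (3 * (r - 2)))) *
        ENNReal.ofReal (s ^ (-((r + 2) / (2 * r)))) := by
  have h0 : 0 < r := by linarith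
  have h2 : 0 < r - 2 := by linarith
  have h38 : 0 ≤ 3 * r - 8 := by linarith
  have hb0 : 0 ≤ (r + 2) / (3 * (r - 2)) := by positivity
  have hm : mixedNorm volume I ∞ 2 u =
      essSup (fun s => eLpNorm (u s) 2 volume) (volume.restrict I) := by
    unfold mixedNorm; rw [if_pos rfl]
  filter_upwards [ae_restrict_mem hI,
    ENNReal.ae_le_essSup (μ := volume.restrict I) (fun s => eLpNorm (u s) 2 volume)] with s hs hs2
  have hs0 : 0 < s := hA.trans_le (hIt hs).1
  have hus : Measurable (u s) := hu.of_uncurry_left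
  refine (interp_s hr hr4 hus).trans ?_
  rw [mul_assoc]
  rw [← hm] at hs2
  refine mul_le_mul' (ENNReal.rpow_le_rpow hs2 (by positivity)) ?_
  have e : ENNReal.ofReal (s ^ (-((r + 2) / (2 * r)))) =
      ENNReal.ofReal (s ^ (-(3 * (1 / 2 - 1 / r)))) ^ ((r + 2) / (3 * (r - 2))) := by
    rw [ENNReal.ofReal_rpow_of_nonneg (by positivity) hb0, ← Real.rpow_mul hs0.le]
    congr 2; field_simp
  rw [e, ← ENNReal.mul_rpow_of_nonneg _ _ hb0]
  refine ENNReal.rpow_le_rpow ?_ hb0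
  have h1 : ENNReal.ofReal (s ^ (3 * (1 / 2 - 1 / r))) *
            eLpNorm (u s) (ENNReal.ofReal r) volume ≤
      ⨆ s ∈ I, ENNReal.ofReal (s ^ (3 * (1 / 2 - 1 / r))) *
            eLpNorm (u s) (ENNReal.ofReal r) volume :=
    le_iSup₂ (f := fun s (_ : s ∈ I) => ENNReal.ofReal (s ^ (3 * (1 / 2 - 1 / r))) *
            eLpNorm (u s) (ENNReal.ofReal r) volume) s hs
  refine le_trans (le_of_eq ?_) (mul_le_mul_left h1 _)
  rw [mul_right_comm, ← ENNReal.ofReal_mul (by positivity), ← Real.rpow_add hs0, add_neg_cancel,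
    Real.rpow_zero, ENNReal.ofReal_one, one_mul]

/-- **Three-dimensional interpolation estimate (Case 2 of the third Duhamel term).**
Fix `8/3 ≤ r < 4`.  For any `t > 0`, `A > 0`, any measurable interval `I ⊆ [A, t/2]`, and any
measurable `u` on `I × ℝ³`,
`‖∫_I e^{i(t-s)Δ}(|u|^{4/3}u)(s) ds‖_{L^r_x} ≤ C t^{-3(1/2-1/r)} A^{-(4-r)/(2r)}
  ‖u‖_{L^∞_s L²_x(I×ℝ³)}^{2(3r-8)/(3(r-2))}
  (sup_{s∈I} s^{3(1/2-1/r)} ‖u(s)‖_{L^r_x})^{(r+2)/(3(r-2))}`, with `C = C(r)`. -/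
theorem interpolation_case2_3d (r : ℝ) (hr : 8 / 3 ≤ r) (hr4 : r < 4) :
    ∃ C : ℝ, 0 < C ∧
      ∀ t : ℝ, 0 < t → ∀ A : ℝ, 0 < A →
        ∀ I : Set ℝ, MeasurableSet I → I.OrdConnected → I ⊆ Set.Icc A (t / 2) →
          ∀ u : ℝ → EuclideanSpace ℝ (Fin 3) → ℂ, Measurable (Function.uncurry u) →
            eLpNorm (fun x => ∫ s in I, schrod 3 (t - s) (nonlin (4 / 3) (u s)) x)
                (ENNReal.ofReal r) volume ≤
              ENNReal.ofReal (C * t ^ (-(3 * (1 / 2 - 1 / r))) * A ^ (-((4 - r) / (2 * r)))) *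
                mixedNorm volume I ∞ 2 u ^ (2 * (3 * r - 8) / (3 * (r - 2))) *
                (⨆ s ∈ I, ENNReal.ofReal (s ^ (3 * (1 / 2 - 1 / r))) *
                    eLpNorm (u s) (ENNReal.ofReal r) volume) ^ ((r + 2) / (3 * (r - 2))) := by
  have h0 : 0 < r := by linarith
  have hr2 : 2 < r := by linarith
  refine ⟨C3 r * C2 r, mul_pos (C3_pos hr2 hr4) (C2_pos hr2), ?_⟩
  intro t ht A hA I hI _ hIt u hu
  have hg := genF ht hr2 hr4 hA hI hIt (nonlin_meas hu) (hK_final hr hr4 hA hI hIt hu)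
  have hT : ∀ x, ∫ s in I, schrod 3 (t - s) (nonlin (4 / 3) (u s)) x =
      ∫ s in I, Sf (t - s) (nonlin (4 / 3) (u s)) x := by
    intro x
    refine setIntegral_congr_fun hI fun s hs => ?_
    have : 0 < t - s := by have := (hIt hs).2; linarith
    exact schrod_eq this _ x
  simp only [hT]
  rw [eLpNorm_eq_lintegral_rpow_enorm_toReal (by simpa using h0) (by simp),
    ENNReal.toReal_ofReal h0.le, mul_assoc (ENNReal.ofReal _)]
  refine (ENNReal.rpow_le_rpow hg (by positivity)).trans (le_of_eq ?_)
  rw [← ENNReal.rpow_mul, mul_one_div_cancel h0.ne', ENNReal.rpow_one]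
end
end

section
/- Three-dimensional interpolation estimate (Case 3 of the last Duhamel term): fix 4 ≤ r < 6. For any t > 0, any B > 0, any measurable interval I ⊆ [max(t/2, t−B), t], and any measurable u : I × ℝ³ → ℂ, one has ‖ ∫_I e^{i(t−s)Δ} (|u|^{4/3}u)(s) ds ‖_{L^r_x(ℝ³)} ≤ C t^{−(r+6)/(2r)} B^{(6−r)/(2r)} ‖u‖_{L^∞_s L²_x(I×ℝ³)}^{2(3r−10)/(3(r−2))} ( sup_{s ∈ I} s^{3(1/2−1/r)} ‖u(s)‖_{L^r_x(ℝ³)} )^{(r+6)/(3(r−2))}, with C depending only on r. -/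
open MeasureTheory Set
open scoped ENNReal Real

noncomputable section

open FourierTransform SchwartzMap in
theorem planch {f : EuclideanSpace ℝ (Fin 3) → ℂ} (hf : Integrable f) :
    ∫⁻ x, ‖𝓕 f x‖ₑ ^ (2:ℝ) ≤ ∫⁻ x, ‖f x‖ₑ ^ (2:ℝ) := by
  by_cases hfin : ∫⁻ x, ‖f x‖ₑ ^ (2:ℝ) = ∞
  · rw [hfin]; exact le_top
  have h2 : MemLp f 2 := by
    refine ⟨hf.1, ?_⟩
    rw [eLpNorm_lt_top_iff_lintegral_rpow_enorm_lt_top (by simp) (by simp)]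
    simpa using lt_top_iff_ne_top.2 hfin
  set G : Lp ℂ 2 (volume : Measure (EuclideanSpace ℝ (Fin 3))) := 𝓕 (h2.toLp f) with hG
  have hcont : Continuous (𝓕 f) := 
    VectorFourier.fourierIntegral_continuous Real.continuous_fourierChar (L := innerₗ (EuclideanSpace ℝ (Fin 3))) continuous_inner hf
  have hae : ∀ᵐ x, 𝓕 f x = G x := by
    apply ae_eq_of_integral_contDiff_smul_eq hcont.locallyIntegrable
      ((Lp.memLp G).locallyIntegrable (by norm_num))
    intro g hg1 hg2
    have hg1' : ContDiff ℝ _ (fun x => (g x : ℂ)) := Complex.ofRealCLM.contDiff.comp hg1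
    have hg2' : HasCompactSupport (fun x => (g x : ℂ)) := hg2.comp_left (g := Complex.ofReal) (by simp)
    let φ : 𝓢(EuclideanSpace ℝ (Fin 3), ℂ) := hg2'.toSchwartzMap hg1'
    have hφ : ∀ x, φ x = (g x : ℂ) := fun x => rfl
    have h3 := Lp.fourier_toTemperedDistribution_eq (h2.toLp f)
    have h4 := congrArg (fun T => T φ) h3
    simp only [TemperedDistribution.fourier_apply, Lp.toTemperedDistribution_apply] at h4
    have h5 := VectorFourier.integral_fourierIntegral_smul_eq_flip (L := innerₗ (EuclideanSpace ℝ (Fin 3))) (μ := volume) (ν := volume)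
      (f := φ) (g := f) Real.continuous_fourierChar continuous_inner φ.integrable hf
    calc ∫ x, g x • 𝓕 f x = ∫ x, φ x • 𝓕 f x := by simp [hφ]
      _ = ∫ x, (𝓕 φ : 𝓢(EuclideanSpace ℝ (Fin 3), ℂ)) x • f x := by
        rw [SchwartzMap.fourier_coe]
        rw [flip_innerₗ] at h5
        exact h5.symm
      _ = ∫ x, (𝓕 φ : 𝓢(EuclideanSpace ℝ (Fin 3), ℂ)) x • h2.toLp f x := by
        apply integral_congr_ae
        filter_upwards [h2.coeFn_toLp] with x hx
        rw [hx]
      _ = ∫ x, φ x • G x := h4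
      _ = ∫ x, g x • G x := by simp [hφ]
  have h6 : eLpNorm (𝓕 f) 2 = eLpNorm f 2 := by
    rw [eLpNorm_congr_ae hae, ← eLpNorm_congr_ae h2.coeFn_toLp]
    have := Lp.norm_fourier_eq (h2.toLp f)
    rw [← hG, Lp.norm_def, Lp.norm_def] at this
    exact (ENNReal.toReal_eq_toReal_iff' (Lp.eLpNorm_ne_top _) (Lp.eLpNorm_ne_top _)).1 this
  rw [eLpNorm_eq_lintegral_rpow_enorm_toReal (by simp) (by simp), eLpNorm_eq_lintegral_rpow_enorm_toReal (by simp) (by simp)] at h6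
  simp only [ENNReal.toReal_ofNat] at h6
  exact (ENNReal.rpow_left_injective (by norm_num : (1/2:ℝ) ≠ 0) h6).le

theorem lint_rpow {c L : ℝ} (hc : -1 < c) (hL : 0 ≤ L) :
    ∫⁻ x in Ioc 0 L, ENNReal.ofReal (x ^ c) = ENNReal.ofReal (L ^ (c+1) / (c+1)) := by
  rw [← ofReal_integral_eq_lintegral_ofReal]
  · rw [← intervalIntegral.integral_of_le hL, integral_rpow (Or.inl hc), Real.zero_rpow (by linarith)]
    simp
  · exact (intervalIntegrable_iff_integrableOn_Ioc_of_le hL).1 (intervalIntegral.intervalIntegrable_rpow' hc)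
  · filter_upwards [self_mem_ae_restrict measurableSet_Ioc] with x hx
    exact Real.rpow_nonneg hx.1.le _

open FourierTransform in
theorem norm_fourier_le (f : EuclideanSpace ℝ (Fin 3) → ℂ) (x) :
    ‖𝓕 f x‖ₑ ≤ ∫⁻ y, ‖f y‖ₑ := by
  rw [Real.fourier_eq]
  refine (enorm_integral_le_lintegral_enorm _).trans (le_of_eq ?_)
  congr with y
  rw [← ofReal_norm, ← ofReal_norm, Circle.norm_smul]

open FourierTransform in
theorem HY_level {f : EuclideanSpace ℝ (Fin 3) → ℂ} (hf : Integrable f) (hm : Measurable f)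
    {p A l : ℝ} (hp : 1 < p) (hA : 0 < A) (hl : 0 < l)
    (hfA : ∫⁻ x, ‖f x‖ₑ ^ p = ENNReal.ofReal A) :
    volume {x | l < ‖𝓕 f x‖} ≤ ENNReal.ofReal (4 * l ^ (-2:ℝ)) *
      ∫⁻ x, ({x | l * ‖f x‖ ^ (p-1) ≤ 2 * A}.indicator (fun x => ‖f x‖ₑ ^ (2:ℝ)) x) := by
  set S := {x | l * ‖f x‖ ^ (p-1) ≤ 2 * A} with hS
  have hSm : MeasurableSet S := measurableSet_le (by fun_prop) (by fun_prop)
  have hf1 : Integrable (Sᶜ.indicator f) := hf.indicator hSm.compl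
  have hf2 : Integrable (S.indicator f) := hf.indicator hSm
  have hadd : 𝓕 f = 𝓕 (S.indicator f) + 𝓕 (Sᶜ.indicator f) := by
    conv_lhs => rw [← S.indicator_self_add_compl f]
    exact (VectorFourier.fourierIntegral_add Real.continuous_fourierChar
      (L := innerₗ (EuclideanSpace ℝ (Fin 3))) continuous_inner hf2 hf1)
  have h1 : ∀ x, ‖𝓕 (Sᶜ.indicator f) x‖ ≤ l / 2 := by
    intro x
    have : ‖𝓕 (Sᶜ.indicator f) x‖ₑ ≤ ENNReal.ofReal (l/2) := by
      calc _ ≤ ∫⁻ y, ‖Sᶜ.indicator f y‖ₑ := norm_fourier_le _ _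
        _ ≤ ∫⁻ y, ENNReal.ofReal (l / (2*A)) * ‖f y‖ₑ ^ p := by
          apply lintegral_mono
          intro y
          by_cases hy : y ∈ S
          · simp [hy]
          · simp only [mem_compl_iff, hy, not_false_eq_true, indicator_of_mem]
            have hy' : 2 * A < l * ‖f y‖ ^ (p-1) := not_le.1 hy
            have h0 : f y ≠ 0 := by
              intro h0
              rw [h0, norm_zero, Real.zero_rpow (by linarith)] at hy'
              linarith
            have hpos : 0 < ‖f y‖ := norm_pos_iff.2 h0
            rw [← ofReal_norm, ENNReal.ofReal_rpow_of_pos hpos, ← ENNReal.ofReal_mul (by positivity)]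
            apply ENNReal.ofReal_le_ofReal
            have : ‖f y‖ ^ p = ‖f y‖ ^ (p-1) * ‖f y‖ := by
              rw [← Real.rpow_add_one hpos.ne']; ring_nf
            rw [this, div_mul_eq_mul_div, le_div_iff₀ (by positivity)]
            nlinarith
        _ = ENNReal.ofReal (l/2) := by
          rw [lintegral_const_mul _ (by fun_prop), hfA, ← ENNReal.ofReal_mul (by positivity)]
          congr 1; field_simp
    rw [← ofReal_norm] at this
    exact (ENNReal.ofReal_le_ofReal_iff (by positivity)).1 this
  have h2 : {x | l < ‖𝓕 f x‖} ⊆ {x | ENNReal.ofReal (l^2/4) ≤ ‖𝓕 (S.indicator f) x‖ₑ ^ (2:ℝ)} := by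
    intro x hx
    simp only [mem_ofPred_eq] at hx ⊢
    rw [hadd, Pi.add_apply] at hx
    have := norm_add_le (𝓕 (S.indicator f) x) (𝓕 (Sᶜ.indicator f) x)
    have := h1 x
    rw [← ofReal_norm, ENNReal.ofReal_rpow_of_nonneg (norm_nonneg _) (by norm_num)]
    apply ENNReal.ofReal_le_ofReal
    rw [Real.rpow_two]
    have : l/2 ≤ ‖𝓕 (S.indicator f) x‖ := by linarith
    nlinarith
  have hcont : Continuous (𝓕 (S.indicator f)) :=
    VectorFourier.fourierIntegral_continuous Real.continuous_fourierChar (L := innerₗ (EuclideanSpace ℝ (Fin 3))) continuous_inner hf2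
  have h0 : ENNReal.ofReal (l^2/4) ≠ 0 := by simp; positivity
  calc _ ≤ volume {x | ENNReal.ofReal (l^2/4) ≤ ‖𝓕 (S.indicator f) x‖ₑ ^ (2:ℝ)} := measure_mono h2
    _ ≤ (∫⁻ x, ‖𝓕 (S.indicator f) x‖ₑ ^ (2:ℝ)) / ENNReal.ofReal (l^2/4) :=
      meas_ge_le_lintegral_div (hcont.measurable.enorm.pow_const _).aemeasurable h0 (by simp)
    _ ≤ (∫⁻ x, ‖S.indicator f x‖ₑ ^ (2:ℝ)) / ENNReal.ofReal (l^2/4) := by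
      exact ENNReal.div_le_div_right (planch hf2) _
    _ = _ := by
      rw [div_eq_mul_inv, mul_comm, ← ENNReal.ofReal_inv_of_pos (by positivity)]
      congr 1
      · congr 1; rw [Real.rpow_neg hl.le, Real.rpow_two]; field_simp
      · congr with x
        by_cases hx : x ∈ S <;> simp [hx]

open FourierTransform in
theorem HY (q : ℝ) (hq : 2 < q) : ∃ K : ℝ, 0 < K ∧
    ∀ f : EuclideanSpace ℝ (Fin 3) → ℂ, Integrable f → Measurable f →
      ∫⁻ x, ‖𝓕 f x‖ₑ ^ q ≤ ENNReal.ofReal K * (∫⁻ x, ‖f x‖ₑ ^ (q/(q-1))) ^ (q-1) := by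
  have hq2 : 0 < q - 2 := by linarith
  have hq1 : 0 < q - 1 := by linarith
  refine ⟨q * (4 * (2 ^ (q-2) / (q-2))), by positivity, fun f hf hm => ?_⟩
  set p := q/(q-1) with hpdef
  have hp : 1 < p := by rw [hpdef, lt_div_iff₀ hq1]; linarith
  by_cases htop : ∫⁻ x, ‖f x‖ₑ ^ p = ∞
  · rw [htop, ENNReal.top_rpow_of_pos hq1, ENNReal.mul_top (by simp; positivity)]
    exact le_top
  by_cases hzero : ∫⁻ x, ‖f x‖ₑ ^ p = 0
  · rw [lintegral_eq_zero_iff (by fun_prop)] at hzero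
    have h0 : ∀ᵐ x, ‖f x‖ₑ = 0 := by
      filter_upwards [hzero] with x hx
      simpa [ENNReal.rpow_eq_zero_iff, (by linarith : 0 < p), (by linarith : ¬ p < 0)] using hx
    have h1 : ∫⁻ x, ‖f x‖ₑ = 0 := by
      rw [lintegral_eq_zero_iff (by fun_prop)]; exact h0
    have h2 : ∀ x, ‖𝓕 f x‖ₑ = 0 := fun x => by
      have := norm_fourier_le f x
      rw [h1] at this
      exact le_antisymm this zero_le
    simp [h2, (by linarith : 0 < q)]
  obtain ⟨A, hA, hfA⟩ : ∃ A : ℝ, 0 < A ∧ ∫⁻ x, ‖f x‖ₑ ^ p = ENNReal.ofReal A :=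
    ⟨_, ENNReal.toReal_pos hzero htop, (ENNReal.ofReal_toReal htop).symm⟩
  have hcont : Continuous (𝓕 f) :=
    VectorFourier.fourierIntegral_continuous Real.continuous_fourierChar (L := innerₗ (EuclideanSpace ℝ (Fin 3))) continuous_inner hf
  have hq0 : 0 < q := by linarith
  have hLC := lintegral_rpow_eq_lintegral_meas_lt_mul (volume : Measure (EuclideanSpace ℝ (Fin 3)))
    (f := fun x => ‖𝓕 f x‖) (Filter.Eventually.of_forall fun x => norm_nonneg _) hcont.norm.measurable.aemeasurable hq0
  have e1 : ∫⁻ x, ‖𝓕 f x‖ₑ ^ q = ∫⁻ x, ENNReal.ofReal (‖𝓕 f x‖ ^ q) := by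
    congr with x
    rw [← ofReal_norm, ENNReal.ofReal_rpow_of_nonneg (norm_nonneg _) hq0.le]
  let T : ℝ → EuclideanSpace ℝ (Fin 3) → ℝ≥0∞ := fun l x =>
    ENNReal.ofReal (4 * l ^ (q-3)) * ({z : ℝ × EuclideanSpace ℝ (Fin 3) | z.1 * ‖f z.2‖ ^ (p-1) ≤ 2 * A}.indicator (fun z => ‖f z.2‖ₑ ^ (2:ℝ)) (l,x))
  have hTm : Measurable (Function.uncurry T) := by
    apply Measurable.mul (by fun_prop)
    apply Measurable.indicator (by fun_prop)
    exact measurableSet_le (by fun_prop) (by fun_prop)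
  have hin : ∀ x, ∫⁻ l in Ioi 0, T l x ≤ ENNReal.ofReal (4 * ((2*A)^(q-2)/(q-2))) * ‖f x‖ₑ ^ p := by
    intro x
    by_cases h0 : f x = 0
    · have : ∀ l, T l x = 0 := fun l => by simp [T, indicator, h0]
      simp [this]
    have hpos : 0 < ‖f x‖ := norm_pos_iff.2 h0
    set L := 2 * A / ‖f x‖ ^ (p-1) with hL
    have hL0 : 0 < L := by positivity
    calc ∫⁻ l in Ioi 0, T l x ≤ ∫⁻ l in Ioi 0, (Ioc 0 L).indicator (fun l => ENNReal.ofReal (4 * ‖f x‖^2) * ENNReal.ofReal (l^(q-3))) l := by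
          apply setLIntegral_mono' measurableSet_Ioi
          intro l hl
          simp only [T]
          by_cases hc : l * ‖f x‖ ^ (p-1) ≤ 2 * A
          · have hlL : l ∈ Ioc 0 L := ⟨hl, by rw [hL, le_div_iff₀ (by positivity)]; exact hc⟩
            rw [indicator_of_mem (by exact hc), indicator_of_mem hlL, ← ofReal_norm, 
              ENNReal.ofReal_rpow_of_nonneg (norm_nonneg _) (by norm_num), ENNReal.ofReal_mul (by norm_num),
              ENNReal.ofReal_mul (by norm_num)]
            rw [Real.rpow_two]
            apply le_of_eq; ring
          · rw [indicator_of_notMem (by exact hc)]; simp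
      _ = ENNReal.ofReal (4 * ‖f x‖^2) * ∫⁻ l in Ioc 0 L, ENNReal.ofReal (l^(q-3)) := by
          rw [lintegral_indicator measurableSet_Ioc, Measure.restrict_restrict measurableSet_Ioc,
            inter_eq_left.2 Ioc_subset_Ioi_self, lintegral_const_mul _ (by fun_prop)]
      _ = _ := by
          rw [lint_rpow (by linarith) hL0.le, ← ENNReal.ofReal_mul (by positivity), ← ofReal_norm,
            ENNReal.ofReal_rpow_of_pos hpos, ← ENNReal.ofReal_mul (by positivity)]
          congr 1
          rw [hL, Real.div_rpow (by positivity) (by positivity), ← Real.rpow_mul (norm_nonneg _)]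
          have e : q - 3 + 1 = q - 2 := by ring
          rw [e]
          have e2 : ‖f x‖ ^ p * ‖f x‖ ^ ((p-1)*(q-2)) = ‖f x‖^2 := by
            rw [← Real.rpow_add hpos, ← Real.rpow_two]
            congr 1
            rw [hpdef]; field_simp; ring
          have : 0 < ‖f x‖ ^ ((p-1)*(q-2)) := by positivity
          rw [← e2]
          field_simp
  rw [e1, hLC]
  calc _ ≤ ENNReal.ofReal q * ∫⁻ l in Ioi 0, ∫⁻ x, T l x := by
        refine mul_le_mul_right ?_ _
        apply setLIntegral_mono' measurableSet_Ioi
        intro l hl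
        have hl : 0 < l := hl
        have := HY_level hf hm hp hA hl hfA
        simp only [T]
        rw [lintegral_const_mul]
        · calc _ ≤ _ := mul_le_mul_left this _
            _ = _ := by
              rw [mul_right_comm, ← ENNReal.ofReal_mul (by positivity), mul_assoc 4, ← Real.rpow_add hl]
              congr 3
              ring_nf
        · apply Measurable.indicator (f := fun x => ‖f x‖ₑ ^ (2:ℝ)) (s := {x | l * ‖f x‖ ^ (p-1) ≤ 2 * A}) (by fun_prop)
          exact measurableSet_le (by fun_prop) (by fun_prop)
    _ = ENNReal.ofReal q * ∫⁻ x, ∫⁻ l in Ioi 0, T l x := by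
        rw [lintegral_lintegral_swap hTm.aemeasurable]
    _ ≤ ENNReal.ofReal q * ∫⁻ x, ENNReal.ofReal (4 * ((2*A)^(q-2)/(q-2))) * ‖f x‖ₑ ^ p := by
        gcongr with x; exact hin x
    _ = _ := by
        rw [lintegral_const_mul _ (by fun_prop), hfA, ← ENNReal.ofReal_mul (by positivity),
          ENNReal.ofReal_rpow_of_pos hA, ← ENNReal.ofReal_mul (by positivity), ← ENNReal.ofReal_mul (by positivity)]
        congr 1
        have : A ^ (q-1) = A^(q-2) * A := by rw [← Real.rpow_add_one hA.ne']; ring_nf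
        rw [this, Real.mul_rpow (by norm_num) hA.le]
        ring

theorem rpow_mul_self (a : ℝ≥0∞) {c : ℝ} (hc : 0 ≤ c) : a ^ c * a = a ^ (c + 1) := by
  rw [ENNReal.rpow_add_of_nonneg _ _ hc (by norm_num), ENNReal.rpow_one]

theorem exp_I_norm (a b : ℝ) : ‖Complex.exp (Complex.I * (a : ℂ) / (4 * (b : ℂ)))‖ = 1 := by
  have : Complex.I * (a : ℂ) / (4 * (b : ℂ)) = ((a / (4 * b) : ℝ) : ℂ) * Complex.I := by
    push_cast; ring
  rw [this, Complex.norm_exp_ofReal_mul_I]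

open FourierTransform in
theorem schrod_norm {τ : ℝ} (hτ : 0 < τ) (f : EuclideanSpace ℝ (Fin 3) → ℂ) (x : EuclideanSpace ℝ (Fin 3)) :
    ‖schrod 3 τ f x‖ₑ = ENNReal.ofReal ((4 * π * τ) ^ (-(3/2) : ℝ)) *
      ‖𝓕 (fun y => Complex.exp (Complex.I * ((‖y‖ ^ 2 : ℝ) : ℂ) / (4 * (τ : ℂ))) * f y) ((4 * π * τ)⁻¹ • x)‖ₑ := by
  rw [schrod, if_neg hτ.ne', enorm_mul]
  have hπ := Real.pi_pos
  congr 1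
  · rw [← ofReal_norm]
    have e : (-((3:ℕ):ℂ) / 2) = ((-(3/2) : ℝ) : ℂ) := by push_cast; ring
    rw [e, Complex.norm_cpow_real]
    congr 2
    simp [abs_of_pos hτ, abs_of_pos hπ]
  · rw [Real.fourier_eq]
    have : ∀ y, Complex.exp (Complex.I * ((‖x - y‖ ^ 2 : ℝ) : ℂ) / (4 * (τ : ℂ))) * f y
       = Complex.exp (Complex.I * ((‖x‖ ^ 2 : ℝ) : ℂ) / (4 * (τ : ℂ))) * 
       (Real.fourierChar (-(inner ℝ y ((4 * π * τ)⁻¹ • x))) • (Complex.exp (Complex.I * ((‖y‖ ^ 2 : ℝ) : ℂ) / (4 * (τ : ℂ))) * f y)) := by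
      intro y
      rw [Circle.smul_def, Real.fourierChar_apply, smul_eq_mul, ← mul_assoc, ← mul_assoc, ← Complex.exp_add, ← Complex.exp_add]
      congr 2
      rw [@norm_sub_sq_real, inner_smul_right, real_inner_comm]
      push_cast
      have h1 : (τ:ℂ) ≠ 0 := by exact_mod_cast hτ.ne'
      have h2 : (π:ℂ) ≠ 0 := by exact_mod_cast hπ.ne'
      field_simp
      ring
    simp_rw [this]
    rw [integral_const_mul, enorm_mul]
    have : ‖Complex.exp (Complex.I * ((‖x‖ ^ 2 : ℝ) : ℂ) / (4 * (τ : ℂ)))‖ₑ = 1 := by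
      rw [← ofReal_norm, exp_I_norm]; simp
    rw [this, one_mul]

theorem schrod_undef {τ : ℝ} (hτ : 0 < τ) {f : EuclideanSpace ℝ (Fin 3) → ℂ} (hm : Measurable f)
    (hf : ¬ Integrable f) (x : EuclideanSpace ℝ (Fin 3)) : schrod 3 τ f x = 0 := by
  rw [schrod, if_neg hτ.ne']
  rw [integral_undef, mul_zero]
  intro h
  apply hf
  refine h.mono hm.aestronglyMeasurable (Filter.Eventually.of_forall fun y => ?_)
  rw [norm_mul, exp_I_norm, one_mul]

theorem dispersive (r : ℝ) (hr : 2 < r) : ∃ K : ℝ, 0 < K ∧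
    ∀ τ : ℝ, 0 < τ → ∀ f : EuclideanSpace ℝ (Fin 3) → ℂ, Measurable f →
      ∫⁻ x, ‖schrod 3 τ f x‖ₑ ^ r ≤ ENNReal.ofReal (K * τ ^ (3 - 3/2*r)) * (∫⁻ x, ‖f x‖ₑ ^ (r/(r-1))) ^ (r-1) := by
  obtain ⟨K, hK, H⟩ := HY r hr
  have hπ := Real.pi_pos
  refine ⟨(4 * π) ^ (3 - 3/2*r) * K, by positivity, fun τ hτ f hm => ?_⟩
  by_cases hf : Integrable f
  swap
  · simp [schrod_undef hτ hm hf, (by linarith : 0 < r)]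
  set g := (fun y => Complex.exp (Complex.I * ((‖y‖ ^ 2 : ℝ) : ℂ) / (4 * (τ : ℂ))) * f y) with hg
  have hgm : Measurable g := by fun_prop
  have hgn : ∀ y, ‖g y‖ = ‖f y‖ := fun y => by rw [hg]; simp only; rw [norm_mul, exp_I_norm, one_mul]
  have hgi : Integrable g := hf.mono hgm.aestronglyMeasurable (Filter.Eventually.of_forall fun y => (hgn y).le)
  have hR : (4 * π * τ)⁻¹ ≠ 0 := by positivity
  have hc : Continuous (FourierTransform.fourier g) :=
    VectorFourier.fourierIntegral_continuous Real.continuous_fourierChar (L := innerₗ (EuclideanSpace ℝ (Fin 3))) continuous_inner hgi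
  calc ∫⁻ x, ‖schrod 3 τ f x‖ₑ ^ r
      = ∫⁻ x, ENNReal.ofReal ((4 * π * τ) ^ (-(3/2) * r : ℝ)) * ‖FourierTransform.fourier g ((4 * π * τ)⁻¹ • x)‖ₑ ^ r := by
        congr with x
        rw [schrod_norm hτ, ENNReal.mul_rpow_of_nonneg _ _ (by linarith), ENNReal.ofReal_rpow_of_pos (by positivity), ← Real.rpow_mul (by positivity)]
    _ = ENNReal.ofReal ((4 * π * τ) ^ (-(3/2) * r : ℝ)) * ∫⁻ x, ‖FourierTransform.fourier g ((4 * π * τ)⁻¹ • x)‖ₑ ^ r := by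
        rw [lintegral_const_mul']; simp
    _ = ENNReal.ofReal ((4 * π * τ) ^ (-(3/2) * r : ℝ)) * (ENNReal.ofReal ((4 * π * τ) ^ (3:ℝ)) * ∫⁻ x, ‖FourierTransform.fourier g x‖ₑ ^ r) := by
        congr 1
        rw [← lintegral_map (f := fun x => ‖FourierTransform.fourier g x‖ₑ ^ r) (g := fun x => (4 * π * τ)⁻¹ • x)
          (hc.measurable.enorm.pow_const _) (by fun_prop)]
        rw [Measure.map_addHaar_smul _ hR, lintegral_smul_measure, smul_eq_mul]
        congr 2
        rw [finrank_euclideanSpace_fin, abs_of_pos (by positivity), inv_pow, inv_inv]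
        norm_cast
    _ ≤ ENNReal.ofReal ((4 * π * τ) ^ (-(3/2) * r : ℝ)) * (ENNReal.ofReal ((4 * π * τ) ^ (3:ℝ)) * 
          (ENNReal.ofReal K * (∫⁻ x, ‖g x‖ₑ ^ (r/(r-1))) ^ (r-1))) := by
        refine mul_le_mul_right (mul_le_mul_right ?_ _) _
        exact H g hgi hgm
    _ = _ := by
        simp_rw [← ofReal_norm, hgn]
        rw [← mul_assoc, ← mul_assoc, ← ENNReal.ofReal_mul (by positivity), ← ENNReal.ofReal_mul (by positivity),
          ← Real.rpow_add (by positivity)]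
        congr 2
        rw [Real.mul_rpow (by positivity) hτ.le]
        have : -(3/2)*r + 3 = 3 - 3/2*r := by ring
        rw [this]; ring

theorem interp (r : ℝ) (hr : 4 ≤ r) {u : EuclideanSpace ℝ (Fin 3) → ℂ} (hu : Measurable u) :
    (∫⁻ x, ‖nonlin (4/3) u x‖ₑ ^ (r/(r-1))) ^ (r-1) ≤
      (eLpNorm u 2 volume ^ (2 * (3 * r - 10) / (3 * (r - 2))) *
        eLpNorm u (ENNReal.ofReal r) volume ^ ((r + 6) / (3 * (r - 2)))) ^ r := by
  have h1 : 0 < r - 1 := by linarith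
  have h2 : 0 < r - 2 := by linarith
  have h10 : 0 < 3 * r - 10 := by linarith
  have h0 : 0 < r := by linarith
  set α := r * (3 * r - 10) / (3 * (r-1) * (r-2)) with hα
  set β := (r + 6) / (3 * (r-1) * (r-2)) with hβ
  have hα0 : 0 ≤ α := by positivity
  have hβ0 : 0 ≤ β := by positivity
  have e : ∀ x, ‖nonlin (4/3) u x‖ₑ ^ (r/(r-1)) = (‖u x‖ₑ ^ (2:ℝ)) ^ α * (‖u x‖ₑ ^ r) ^ β := by
    intro x
    have : ‖nonlin (4/3) u x‖ₑ = ‖u x‖ₑ ^ (7/3 : ℝ) := by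
      rw [nonlin, enorm_mul, ← ofReal_norm, ← ofReal_norm (u x), Complex.norm_real, Real.norm_of_nonneg (by positivity),
        ← ENNReal.ofReal_rpow_of_nonneg (norm_nonneg _) (by norm_num)]
      rw [rpow_mul_self _ (by norm_num)]
      norm_num
    rw [this, ← ENNReal.rpow_mul, ← ENNReal.rpow_mul, ← ENNReal.rpow_mul, ← ENNReal.rpow_add_of_nonneg _ _ (by positivity) (by positivity)]
    congr 1
    rw [hα, hβ]; field_simp; ring
  simp_rw [e]
  have hH := ENNReal.lintegral_mul_norm_pow_le (μ := volume) (f := fun x => ‖u x‖ₑ ^ (2:ℝ)) (g := fun x => ‖u x‖ₑ ^ r) 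
    (by fun_prop) (by fun_prop) hα0 hβ0 (by rw [hα, hβ]; field_simp; ring)
  refine (ENNReal.rpow_le_rpow hH h1.le).trans (le_of_eq ?_)
  rw [eLpNorm_eq_lintegral_rpow_enorm_toReal (by simp) (by simp), 
    eLpNorm_eq_lintegral_rpow_enorm_toReal (by simp [h0]) (by simp), ENNReal.toReal_ofReal h0.le, ENNReal.toReal_ofNat]
  rw [ENNReal.mul_rpow_of_nonneg _ _ h1.le, ENNReal.mul_rpow_of_nonneg _ _ h0.le]
  simp_rw [← ENNReal.rpow_mul]
  congr 2
  · rw [hα]; field_simp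
  · rw [hβ]; field_simp

theorem mink {X : Type*} [MeasurableSpace X] {μ : Measure X} [SFinite μ] {ν : Measure ℝ} [SFinite ν]
    {r : ℝ} (hr : 1 < r) (g : ℝ → X → ℝ≥0∞) (hg : Measurable (Function.uncurry g))
    (w : ℝ → ℝ≥0∞) (hw : Measurable w) (hw0 : ∀ᵐ s ∂ν, w s ≠ 0 ∧ w s ≠ ∞) (D : ℝ≥0∞)
    (hD : ∀ᵐ s ∂ν, ∫⁻ x, g s x ^ r ∂μ ≤ w s ^ r * D) :
    ∫⁻ x, (∫⁻ s, g s x ∂ν) ^ r ∂μ ≤ (∫⁻ s, w s ∂ν) ^ r * D := by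
  have h0 : 0 < r := by linarith
  have h1 : 0 < r - 1 := by linarith
  have gm : ∀ x, Measurable (fun s => g s x) := fun x => hg.comp (by fun_prop : Measurable fun s => (s, x))
  have key : ∀ x, (∫⁻ s, g s x ∂ν) ^ r ≤ (∫⁻ s, w s ∂ν) ^ (r-1) * ∫⁻ s, w s ^ (1-r) * g s x ^ r ∂ν := by
    intro x
    have hH := ENNReal.lintegral_mul_norm_pow_le (μ := ν) (f := w) (g := fun s => w s ^ (1-r) * g s x ^ r) 
      hw.aemeasurable ((hw.pow_const _).mul ((gm x).pow_const _)).aemeasurable 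
      (p := (r-1)/r) (q := 1/r) (by positivity) (by positivity) (by field_simp; ring)
    have e : ∫⁻ s, g s x ∂ν = ∫⁻ s, w s ^ ((r-1)/r) * (w s ^ (1-r) * g s x ^ r) ^ (1/r) ∂ν := by
      apply lintegral_congr_ae
      filter_upwards [hw0] with s hs
      rw [ENNReal.mul_rpow_of_nonneg _ _ (by positivity), ← ENNReal.rpow_mul, ← ENNReal.rpow_mul, ← mul_assoc,
        ← ENNReal.rpow_add _ _ hs.1 hs.2]
      have : (r-1)/r + (1-r)*(1/r) = 0 := by ring
      rw [this, mul_one_div_cancel h0.ne']; simp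
    rw [e]
    refine (ENNReal.rpow_le_rpow hH h0.le).trans (le_of_eq ?_)
    rw [ENNReal.mul_rpow_of_nonneg _ _ h0.le, ← ENNReal.rpow_mul, ← ENNReal.rpow_mul, div_mul_cancel₀ _ h0.ne', div_mul_cancel₀ _ h0.ne', ENNReal.rpow_one]
  have hWm : Measurable (Function.uncurry fun x s => w s ^ (1-r) * g s x ^ r) := by
    apply Measurable.mul (by fun_prop)
    exact (hg.comp measurable_swap).pow_const _
  calc _ ≤ ∫⁻ x, (∫⁻ s, w s ∂ν) ^ (r-1) * ∫⁻ s, w s ^ (1-r) * g s x ^ r ∂ν ∂μ := lintegral_mono key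
    _ = (∫⁻ s, w s ∂ν) ^ (r-1) * ∫⁻ x, ∫⁻ s, w s ^ (1-r) * g s x ^ r ∂ν ∂μ := by
      exact lintegral_const_mul _ hWm.lintegral_prod_right'
    _ = (∫⁻ s, w s ∂ν) ^ (r-1) * ∫⁻ s, ∫⁻ x, w s ^ (1-r) * g s x ^ r ∂μ ∂ν := by
      rw [lintegral_lintegral_swap hWm.aemeasurable]
    _ ≤ (∫⁻ s, w s ∂ν) ^ (r-1) * ∫⁻ s, w s * D ∂ν := by
      refine mul_le_mul_right (lintegral_mono_ae ?_) _
      filter_upwards [hw0, hD] with s hs hDs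
      have hgs : Measurable (fun x => g s x) := hg.comp (by fun_prop : Measurable fun x => (s, x))
      rw [lintegral_const_mul _ (hgs.pow_const _)]
      calc _ ≤ w s ^ (1-r) * (w s ^ r * D) := mul_le_mul_right hDs _
        _ = _ := by
          rw [← mul_assoc, ← ENNReal.rpow_add _ _ hs.1 hs.2]; simp
    _ = _ := by
      rw [lintegral_mul_const _ hw, ← mul_assoc]
      congr 1
      rw [rpow_mul_self _ h1.le]
      simp

theorem meas_schrod_aux (t : ℝ) (F : ℝ → EuclideanSpace ℝ (Fin 3) → ℂ) (hn : Measurable (Function.uncurry F)) :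
    Measurable (Function.uncurry fun s x => schrod 3 (t - s) (F s) x) := by
  have hint : Measurable fun z : ℝ × EuclideanSpace ℝ (Fin 3) =>
      ∫ y, Complex.exp (Complex.I * ((‖z.2 - y‖ ^ 2 : ℝ) : ℂ) / (4 * ((t - z.1 : ℝ) : ℂ))) *
        F z.1 y := by
    refine StronglyMeasurable.measurable (StronglyMeasurable.integral_prod_right'
      (f := fun w : (ℝ × EuclideanSpace ℝ (Fin 3)) × EuclideanSpace ℝ (Fin 3) =>
        Complex.exp (Complex.I * ((‖w.1.2 - w.2‖ ^ 2 : ℝ) : ℂ) / (4 * ((t - w.1.1 : ℝ) : ℂ))) *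
        F w.1.1 w.2) ?_)
    apply Measurable.stronglyMeasurable
    have hF : Measurable fun w : (ℝ × EuclideanSpace ℝ (Fin 3)) × EuclideanSpace ℝ (Fin 3) => F w.1.1 w.2 :=
      hn.comp (by fun_prop : Measurable fun w : (ℝ × EuclideanSpace ℝ (Fin 3)) × EuclideanSpace ℝ (Fin 3) => (w.1.1, w.2))
    exact Measurable.mul (by fun_prop) hF
  have : (Function.uncurry fun s x => schrod 3 (t - s) (F s) x) =
      fun z => if t - z.1 = 0 then F z.1 z.2 else
        (4 * (Real.pi : ℂ) * Complex.I * ((t - z.1 : ℝ) : ℂ)) ^ (-((3:ℕ) : ℂ) / 2) *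
        ∫ y, Complex.exp (Complex.I * ((‖z.2 - y‖ ^ 2 : ℝ) : ℂ) / (4 * ((t - z.1 : ℝ) : ℂ))) *
        F z.1 y := by
    ext z
    simp only [Function.uncurry, schrod]
    split_ifs <;> rfl
  rw [this]
  apply Measurable.ite
  · exact measurableSet_eq_fun (by fun_prop) (by fun_prop)
  · exact hn
  · exact Measurable.mul (by fun_prop) hint

theorem meas_schrod (t : ℝ) (u : ℝ → EuclideanSpace ℝ (Fin 3) → ℂ) (hu : Measurable (Function.uncurry u)) :
    Measurable (Function.uncurry fun s x => schrod 3 (t - s) (nonlin (4 / 3) (u s)) x) := by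
  have hn : Measurable (Function.uncurry fun s x => nonlin (4 / 3) (u s) x) := by
    have : (Function.uncurry fun s x => nonlin (4 / 3) (u s) x) =
      fun z => ((‖Function.uncurry u z‖ ^ (4/3:ℝ) : ℝ) : ℂ) * Function.uncurry u z := by
      ext z; rfl
    rw [this]; fun_prop
  exact meas_schrod_aux t _ hn

theorem w_int {a t B : ℝ} (ha : a < 1) (hB : 0 < B) {I : Set ℝ} (hI : I ⊆ Icc (t - B) t) :
    ∫⁻ s in I, ENNReal.ofReal ((t - s) ^ (-a)) ≤ ENNReal.ofReal (B ^ (1 - a) / (1 - a)) := by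
  have hsub : I ⊆ (fun s => t - s) ⁻¹' (Icc 0 B) := by
    intro s hs
    have := hI hs
    simp only [mem_preimage, mem_Icc] at this ⊢
    constructor <;> linarith
  calc _ ≤ ∫⁻ s in (fun s => t - s) ⁻¹' (Icc 0 B), ENNReal.ofReal ((t - s) ^ (-a)) := lintegral_mono_set hsub
    _ = ∫⁻ x in Icc 0 B, ENNReal.ofReal (x ^ (-a)) :=
      (Measure.measurePreserving_sub_left volume t).setLIntegral_comp_preimage measurableSet_Icc
        (f := fun x => ENNReal.ofReal (x ^ (-a))) (by fun_prop)
    _ = ∫⁻ x in Ioc 0 B, ENNReal.ofReal (x ^ (-a)) := by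
      rw [Measure.restrict_congr_set Ioc_ae_eq_Icc]
    _ = _ := by
      rw [lint_rpow (by linarith) hB.le]
      congr 2 <;> ring_nf
    _ ≤ _ := le_rfl

/-- **Three-dimensional interpolation estimate (Case 3 of the last Duhamel term).**
Fix `4 ≤ r < 6`.  For any `t > 0`, `B > 0`, any measurable interval
`I ⊆ [max (t/2) (t-B), t]`, and any measurable `u` on `I × ℝ³`,
`‖∫_I e^{i(t-s)Δ}(|u|^{4/3}u)(s) ds‖_{L^r_x} ≤ C t^{-(r+6)/(2r)} B^{(6-r)/(2r)}
  ‖u‖_{L^∞_s L²_x(I×ℝ³)}^{2(3r-10)/(3(r-2))}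
  (sup_{s∈I} s^{3(1/2-1/r)} ‖u(s)‖_{L^r_x})^{(r+6)/(3(r-2))}`, with `C = C(r)`. -/
theorem interpolation_case3_3d (r : ℝ) (hr : 4 ≤ r) (hr6 : r < 6) :
    ∃ C : ℝ, 0 < C ∧
      ∀ t : ℝ, 0 < t → ∀ B : ℝ, 0 < B →
        ∀ I : Set ℝ, MeasurableSet I → I.OrdConnected →
          I ⊆ Set.Icc (max (t / 2) (t - B)) t →
          ∀ u : ℝ → EuclideanSpace ℝ (Fin 3) → ℂ, Measurable (Function.uncurry u) →
            eLpNorm (fun x => ∫ s in I, schrod 3 (t - s) (nonlin (4 / 3) (u s)) x)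
                (ENNReal.ofReal r) volume ≤
              ENNReal.ofReal (C * t ^ (-((r + 6) / (2 * r))) * B ^ ((6 - r) / (2 * r))) *
                mixedNorm volume I ∞ 2 u ^ (2 * (3 * r - 10) / (3 * (r - 2))) *
                (⨆ s ∈ I, ENNReal.ofReal (s ^ (3 * (1 / 2 - 1 / r))) *
                    eLpNorm (u s) (ENNReal.ofReal r) volume) ^ ((r + 6) / (3 * (r - 2))) := by
  have h0 : 0 < r := by linarith
  have h2 : 0 < r - 2 := by linarith
  have h10 : 0 < 3 * r - 10 := by linarith
  have h6 : 0 < 6 - r := by linarith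
  obtain ⟨K, hK, HK⟩ := dispersive r (by linarith)
  set a := 3 * (1 / 2 - 1 / r) with ha
  have h1a : 1 - a = (6 - r) / (2 * r) := by rw [ha]; field_simp; ring
  have h1a0 : 0 < 1 - a := by rw [h1a]; positivity
  set e1 := 2 * (3 * r - 10) / (3 * (r - 2)) with he1
  set e2 := (r + 6) / (3 * (r - 2)) with he2
  have he1p : 0 < e1 := by positivity
  have he2p : 0 < e2 := by positivity
  have hae : a * e2 = (r + 6) / (2 * r) := by rw [ha, he2]; field_simp
  refine ⟨K ^ (1/r) * 2 ^ ((r + 6) / (2 * r)) / (1 - a), by positivity, ?_⟩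
  intro t ht B hB I hIm _ hIsub u hu
  set Mr := ⨆ s ∈ I, ENNReal.ofReal (s ^ a) * eLpNorm (u s) (ENNReal.ofReal r) volume with hMr
  set M2 := mixedNorm volume I ∞ 2 u with hM2
  have hus : ∀ s, Measurable (u s) := fun s => hu.comp (by fun_prop : Measurable fun x => (s, x))
  have hG := meas_schrod t u hu
  set N : ℝ≥0∞ := M2 ^ e1 * (ENNReal.ofReal ((t/2) ^ (-a)) * Mr) ^ e2 with hN
  have hne : ∀ᵐ s ∂(volume.restrict I), s ∈ I ∧ s < t := by
    have h1 : ∀ᵐ s ∂(volume.restrict I), s ≠ t := by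
      apply ae_restrict_of_ae
      exact Measure.ae_ne volume t
    filter_upwards [h1, self_mem_ae_restrict hIm] with s h1 h2
    exact ⟨h2, lt_of_le_of_ne (hIsub h2).2 h1⟩
  have hM2ae : ∀ᵐ s ∂(volume.restrict I), eLpNorm (u s) 2 volume ≤ M2 := by
    rw [hM2, mixedNorm, if_pos rfl]
    exact ENNReal.ae_le_essSup _
  have hD : ∀ᵐ s ∂(volume.restrict I), ∫⁻ x, ‖schrod 3 (t - s) (nonlin (4 / 3) (u s)) x‖ₑ ^ r ≤
      ENNReal.ofReal ((t - s) ^ (-a)) ^ r * (ENNReal.ofReal K * N ^ r) := by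
    filter_upwards [hne, hM2ae] with s hs hs2
    have hτ : 0 < t - s := by linarith [hs.2]
    have hs' : t / 2 ≤ s := (le_max_left _ _).trans (hIsub hs.1).1
    have hspos : 0 < s := by linarith
    have hr1 : eLpNorm (u s) (ENNReal.ofReal r) volume ≤ ENNReal.ofReal ((t/2) ^ (-a)) * Mr := by
      have h3 : ENNReal.ofReal (s ^ a) * eLpNorm (u s) (ENNReal.ofReal r) volume ≤ Mr :=
        le_iSup₂ (f := fun s (_ : s ∈ I) => ENNReal.ofReal (s ^ a) * eLpNorm (u s) (ENNReal.ofReal r) volume) s hs.1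
      have ha0 : 0 ≤ a := by
        have : a = 3 * (r - 2) / (2 * r) := by rw [ha]; field_simp
        rw [this]; positivity
      calc eLpNorm (u s) (ENNReal.ofReal r) volume
          = ENNReal.ofReal (s ^ (-a)) * (ENNReal.ofReal (s ^ a) * eLpNorm (u s) (ENNReal.ofReal r) volume) := by
            rw [← mul_assoc, ← ENNReal.ofReal_mul (by positivity), ← Real.rpow_add hspos]
            simp
        _ ≤ _ := by
            refine mul_le_mul' (ENNReal.ofReal_le_ofReal ?_) h3
            exact Real.rpow_le_rpow_of_nonpos (by positivity) hs' (by linarith)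
    have hnm : Measurable (nonlin (4/3) (u s)) := by
      have := hus s
      unfold nonlin; fun_prop
    calc _ ≤ _ := HK (t - s) hτ _ hnm
      _ ≤ ENNReal.ofReal (K * (t - s) ^ (3 - 3/2*r)) * N ^ r := by
        refine mul_le_mul_right ((interp r hr (hus s)).trans ?_) _
        refine ENNReal.rpow_le_rpow ?_ h0.le
        exact mul_le_mul' (ENNReal.rpow_le_rpow hs2 he1p.le) (ENNReal.rpow_le_rpow hr1 he2p.le)
      _ = _ := by
        rw [ENNReal.ofReal_rpow_of_pos (by positivity), ← Real.rpow_mul hτ.le, ENNReal.ofReal_mul hK.le]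
        have : -a * r = 3 - 3/2*r := by rw [ha]; field_simp; ring
        rw [this]; ring
  have hw0 : ∀ᵐ s ∂(volume.restrict I), ENNReal.ofReal ((t - s) ^ (-a)) ≠ 0 ∧ ENNReal.ofReal ((t - s) ^ (-a)) ≠ ∞ := by
    filter_upwards [hne] with s hs
    have hτ : 0 < t - s := by linarith [hs.2]
    refine ⟨?_, by simp⟩
    simp only [ne_eq, ENNReal.ofReal_eq_zero, not_le]
    positivity
  have hmink := mink (μ := (volume : Measure (EuclideanSpace ℝ (Fin 3)))) (ν := volume.restrict I) (by linarith : 1 < r)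
    (fun s x => ‖schrod 3 (t - s) (nonlin (4 / 3) (u s)) x‖ₑ) hG.enorm
    (fun s => ENNReal.ofReal ((t - s) ^ (-a))) (by fun_prop) hw0 _ hD
  have hw := w_int (a := a) (t := t) (by linarith) hB
    (hIsub.trans (Icc_subset_Icc_left (le_max_right (t/2) (t-B))))
  rw [eLpNorm_eq_lintegral_rpow_enorm_toReal (by simp [h0]) (by simp), ENNReal.toReal_ofReal h0.le]
  calc _ ≤ (∫⁻ x, (∫⁻ s in I, ‖schrod 3 (t - s) (nonlin (4 / 3) (u s)) x‖ₑ) ^ r) ^ (1/r) := by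
        refine ENNReal.rpow_le_rpow (lintegral_mono fun x => ?_) (by positivity)
        exact ENNReal.rpow_le_rpow (enorm_integral_le_lintegral_enorm _) h0.le
    _ ≤ ((∫⁻ s in I, ENNReal.ofReal ((t - s) ^ (-a))) ^ r * (ENNReal.ofReal K * N ^ r)) ^ (1/r) :=
        ENNReal.rpow_le_rpow hmink (by positivity)
    _ ≤ (ENNReal.ofReal (B ^ (1 - a) / (1 - a)) ^ r * (ENNReal.ofReal K * N ^ r)) ^ (1/r) := by
        refine ENNReal.rpow_le_rpow (mul_le_mul_left (ENNReal.rpow_le_rpow hw h0.le) _) (by positivity)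
    _ = ENNReal.ofReal (B ^ (1 - a) / (1 - a)) * (ENNReal.ofReal (K ^ (1/r)) * N) := by
        have hp : 0 ≤ 1/r := by positivity
        rw [ENNReal.mul_rpow_of_nonneg _ _ hp, ENNReal.mul_rpow_of_nonneg _ _ hp, ← ENNReal.rpow_mul, ← ENNReal.rpow_mul,
          mul_one_div_cancel h0.ne', ENNReal.rpow_one, ENNReal.rpow_one, ENNReal.ofReal_rpow_of_pos hK]
    _ = _ := by
        rw [hN, ENNReal.mul_rpow_of_nonneg _ _ he2p.le, ENNReal.ofReal_rpow_of_pos (by positivity),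
          ← Real.rpow_mul (by positivity)]
        have hx : -a * e2 = -((r + 6) / (2 * r)) := by rw [← hae]; ring
        rw [hx]
        have hy : K ^ (1 / r) * 2 ^ ((r + 6) / (2 * r)) / (1 - a) * t ^ (-((r + 6) / (2 * r))) * B ^ ((6 - r) / (2 * r))
            = (B ^ (1 - a) / (1 - a)) * K ^ (1/r) * (t/2) ^ (-((r + 6) / (2 * r))) := by
          rw [Real.div_rpow ht.le (by norm_num), Real.rpow_neg (by norm_num : (0:ℝ) ≤ 2), ← h1a]
          field_simp
        rw [hy, ENNReal.ofReal_mul (by positivity), ENNReal.ofReal_mul (by positivity)]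
        ring
end
end
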